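/- arXiv:1802.07110 — 2 statements merged into one kernel-verified Lean document; each statement's English description precedes it below -/
import Mathlib

section
/- Let p = 2 and let f(s) = s^{q-1} - s^{r-1} with 2 ≤ r < q, where additionally q < 2N/(N-2) in the case R1 = 0 with N ≥ 3. Suppose that for some integer k ≥ 1 there exist λ ∈ [0,∞) with q - r > λ and a not-identically-zero C¹ function w : [R1,R2] → ℝ with w'(R1) = w'(R2) = 0, such that r ↦ r^{N-1} w'(r) is continuous on [R1,R2], differentiable on (R1,R2], with derivative -λ r^{N-1} w(r) there, and such that w has exactly k zeros in (R1,R2). Then the Neumann problem on [R1,R2] admits at least k non-constant radial solutions with u(R1) > 1 and at least k non-constant radial solutions with u(R1) < 1. -/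
open Real Set Filter Topology

noncomputable def phip (p s : ℝ) : ℝ := |s| ^ (p - 2) * s

def Freg (f : ℝ → ℝ) : Prop :=
  ContinuousOn f (Ici 0) ∧ ContDiffOn ℝ 1 f (Ioi 0)

def Feq (f : ℝ → ℝ) : Prop :=
  f 0 = 0 ∧ f 1 = 0 ∧ (∀ s : ℝ, 0 < s → s < 1 → f s < 0) ∧ (∀ s : ℝ, 1 < s → 0 < f s)

def Fzero (p : ℝ) (f : ℝ → ℝ) : Prop :=
  ∃ c : ℝ, ∀ᶠ s in 𝓝[>] (0:ℝ), c ≤ f s / s ^ (p - 1)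

noncomputable def pstar (p : ℝ) (N : ℕ) : EReal :=
  if p < (N:ℝ) then (((N:ℝ) * p / ((N:ℝ) - p) : ℝ) : EReal) else ⊤

noncomputable def fstar (f : ℝ → ℝ) (s : ℝ) : ℝ := sSup (f '' Icc 1 s)

noncomputable def Fint (f : ℝ → ℝ) (s : ℝ) : ℝ := ∫ σ in (1:ℝ)..s, f σ

def Fsubl (p : ℝ) (f : ℝ → ℝ) : Prop :=
  ∃ M : ℝ, 0 < M ∧ ∀ ε > 0, ∀ᶠ s in atTop, f s / s ^ (p - 1) ≤ M + ε

def FsubcWith (p : ℝ) (N : ℕ) (f : ℝ → ℝ) (η : ℝ) : Prop :=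
  (∀ c : ℝ, ∃ᶠ s in atTop, c < f s / s ^ (p - 1)) ∧
  0 < η ∧ η < 1 ∧
  ∃ L : ℝ, (L : EReal) < pstar p N ∧
    ∀ᶠ s in atTop, fstar f s * s / Fint f (η * s) ≤ L

def Fsubc (p : ℝ) (N : ℕ) (f : ℝ → ℝ) : Prop := ∃ η : ℝ, FsubcWith p N f η

/-- A radial solution of the Neumann problem on `[R1,R2]`. -/
def NeumannSol (p : ℝ) (N : ℕ) (R1 R2 : ℝ) (f u : ℝ → ℝ) : Prop :=
  (∀ x ∈ Icc R1 R2, DifferentiableAt ℝ u x) ∧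
  ContinuousOn (deriv u) (Icc R1 R2) ∧
  (∀ x ∈ Icc R1 R2, 0 < u x) ∧
  deriv u R1 = 0 ∧ deriv u R2 = 0 ∧
  ContinuousOn (fun x => x ^ (N - 1) * phip p (deriv u x)) (Icc R1 R2) ∧
  ∀ x ∈ Ioc R1 R2,
    HasDerivAt (fun t => t ^ (N - 1) * phip p (deriv u t)) (-(x ^ (N - 1)) * f (u x)) x

noncomputable def fhat (f : ℝ → ℝ) (s : ℝ) : ℝ := if 0 ≤ s then f s else 0

noncomputable def Fhat (f : ℝ → ℝ) (s : ℝ) : ℝ := ∫ σ in (1:ℝ)..s, fhat f σ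

/-- A solution of the Cauchy problem with datum `d`, for the nonlinearity `g`. -/
def CauchySol (p : ℝ) (N : ℕ) (R1 R2 : ℝ) (g u : ℝ → ℝ) (d : ℝ) : Prop :=
  (∀ x ∈ Icc R1 R2, DifferentiableAt ℝ u x) ∧
  ContinuousOn (deriv u) (Icc R1 R2) ∧
  u R1 = d ∧ deriv u R1 = 0 ∧
  ContinuousOn (fun x => x ^ (N - 1) * phip p (deriv u x)) (Icc R1 R2) ∧
  ∀ x ∈ Ioc R1 R2,
    HasDerivAt (fun t => t ^ (N - 1) * phip p (deriv u t)) (-(x ^ (N - 1)) * g (u x)) x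

noncomputable def rOne (R1 R2 : ℝ) (u : ℝ → ℝ) : ℝ :=
  sSup {x | x ∈ Icc R1 R2 ∧ ∀ s ∈ Ico R1 x, 0 < u s}

noncomputable def rZero (R2 η d : ℝ) (u : ℝ → ℝ) : ℝ :=
  sSup {x | x ∈ Icc 0 R2 ∧ ∀ s ∈ Ico 0 x, η * d < u s}

noncomputable def energy (p : ℝ) (f u : ℝ → ℝ) (x : ℝ) : ℝ :=
  |deriv u x| ^ p / (p / (p - 1)) + Fhat f (u x)

def NonConstOn (R1 R2 : ℝ) (u : ℝ → ℝ) : Prop :=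
  ∃ x ∈ Icc R1 R2, ∃ x' ∈ Icc R1 R2, u x ≠ u x'

def DistinctOn (R1 R2 : ℝ) (u v : ℝ → ℝ) : Prop :=
  ∃ x ∈ Icc R1 R2, u x ≠ v x

noncomputable def nOverPstar (p : ℝ) (N : ℕ) : ℝ :=
  if p < (N:ℝ) then ((N:ℝ) - p) / p else 0

theorem le_of_hasDerivAt_nonneg {f f' : ℝ → ℝ} {a b : ℝ} (hab : a ≤ b)
    (hc : ContinuousOn f (Icc a b)) (hd : ∀ t ∈ Ioo a b, HasDerivAt f (f' t) t)
    (h : ∀ t ∈ Ioo a b, 0 ≤ f' t) : f a ≤ f b := by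
  rcases hab.eq_or_lt with rfl | hab
  · exact le_rfl
  obtain ⟨c, hc', hs⟩ := exists_hasDerivAt_eq_slope f f' hab hc hd
  have h1 := h c hc'
  rw [hs] at h1
  have h2 := mul_nonneg h1 (sub_pos.2 hab).le
  rw [div_mul_cancel₀ _ (sub_pos.2 hab).ne'] at h2
  linarith

theorem eq_of_hasDerivAt_zero {f : ℝ → ℝ} {a b : ℝ} (hab : a ≤ b)
    (hc : ContinuousOn f (Icc a b)) (hd : ∀ t ∈ Ioo a b, HasDerivAt f 0 t) : f a = f b := by
  refine le_antisymm (le_of_hasDerivAt_nonneg (f' := fun _ => 0) hab hc hd fun _ _ => le_rfl) ?_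
  have := le_of_hasDerivAt_nonneg (f := fun t => -f t) (f' := fun _ => 0) hab hc.neg
    (fun t ht => by simpa using (hd t ht).fun_neg) fun _ _ => le_rfl
  linarith

/-- A function whose derivative is bounded below by `-L` times its absolute value stays
nonnegative. -/
theorem nonneg_of_deriv_ge_neg_mul_abs {f f' : ℝ → ℝ} {a b L : ℝ} (hab : a ≤ b)
    (hc : ContinuousOn f (Icc a b)) (hd : ∀ t ∈ Ioo a b, HasDerivAt f (f' t) t)
    (h : ∀ t ∈ Ioo a b, -(L * |f t|) ≤ f' t) (ha : 0 ≤ f a) : 0 ≤ f b := by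
  by_contra! hb
  have hcompact : IsCompact (Icc a b ∩ f ⁻¹' Ici 0) :=
    isCompact_Icc.of_isClosed_subset (hc.preimage_isClosed_of_isClosed isClosed_Icc isClosed_Ici)
      inter_subset_left
  obtain ⟨c, ⟨hcI, hc0⟩, hmax⟩ := hcompact.exists_isGreatest ⟨a, ⟨le_rfl, hab⟩, ha⟩
  have hneg : ∀ t ∈ Ioo c b, f t < 0 := fun t ht => by
    by_contra! h0
    exact absurd (hmax ⟨⟨hcI.1.trans ht.1.le, ht.2.le⟩, h0⟩) (not_le.2 ht.1)
  have hsub : Icc c b ⊆ Icc a b := Icc_subset_Icc_left hcI.1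
  have key := le_of_hasDerivAt_nonneg (f := fun t => exp (-L * t) * f t)
    (f' := fun t => exp (-L * t) * (f' t - L * f t)) hcI.2
    ((by fun_prop : Continuous fun t : ℝ => exp (-L * t)).continuousOn.mul (hc.mono hsub))
    (fun t ht => by
      have h1 : HasDerivAt (fun t => exp (-L * t)) (exp (-L * t) * (-L * 1)) t :=
        ((hasDerivAt_id t).const_mul (-L)).exp
      exact (h1.fun_mul (hd t ⟨hcI.1.trans_lt ht.1, ht.2⟩)).congr_deriv (by ring))
    (fun t ht => by
      have h1 := h t ⟨hcI.1.trans_lt ht.1, ht.2⟩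
      rw [abs_of_neg (hneg t ht)] at h1
      have := exp_pos (-L * t)
      apply mul_nonneg this.le
      linarith)
  have h2 : 0 ≤ exp (-L * c) * f c := mul_nonneg (exp_pos _).le hc0
  have h3 : exp (-L * b) * f b < 0 := mul_neg_of_pos_of_neg (exp_pos _) hb
  linarith

/-- The radial equation `(tⁿ x')' = -tⁿ h` on `[a, b]` with `x' = p` and `p a = 0`. -/
structure IsRadial (n : ℕ) (a b : ℝ) (x p h : ℝ → ℝ) : Prop where
  cont_x : ContinuousOn x (Icc a b)
  cont_p : ContinuousOn p (Icc a b)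
  cont_h : ContinuousOn h (Icc a b)
  deriv_x : ∀ t ∈ Ioo a b, HasDerivAt x (p t) t
  deriv_v : ∀ t ∈ Ioo a b, HasDerivAt (fun t => t ^ n * p t) (-(t ^ n * h t)) t
  p_left : p a = 0

namespace IsRadial

variable {n : ℕ} {a b : ℝ} {x p h : ℝ → ℝ}

theorem const_mul (H : IsRadial n a b x p h) (c : ℝ) :
    IsRadial n a b (fun t => c * x t) (fun t => c * p t) (fun t => c * h t) where
  cont_x := H.cont_x.const_mul c
  cont_p := H.cont_p.const_mul c
  cont_h := H.cont_h.const_mul c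
  deriv_x t ht := (H.deriv_x t ht).const_mul c
  deriv_v t ht := by
    refine (((H.deriv_v t ht).const_mul c).congr_of_eventuallyEq
      (.of_forall fun s => ?_)).congr_deriv ?_
    · ring
    · ring
  p_left := by simp [H.p_left]

theorem sub_const (H : IsRadial n a b x p h) (c : ℝ) :
    IsRadial n a b (fun t => x t - c) p h where
  cont_x := H.cont_x.sub continuousOn_const
  cont_p := H.cont_p
  cont_h := H.cont_h
  deriv_x t ht := (H.deriv_x t ht).sub_const c
  deriv_v := H.deriv_v
  p_left := H.p_left

theorem cont_v (H : IsRadial n a b x p h) : ContinuousOn (fun t => t ^ n * p t) (Icc a b) :=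
  ((continuous_id.pow n).continuousOn).mul H.cont_p

theorem deriv_p (H : IsRadial n a b x p h) (ha : 0 ≤ a) {t : ℝ} (ht : t ∈ Ioo a b) :
    HasDerivAt p (-h t - n * p t / t) t := by
  have h0 : 0 < t := ha.trans_lt ht.1
  have h1 := (H.deriv_v t ht).div (hasDerivAt_pow n t) (pow_pos h0 n).ne'
  refine (h1.congr_of_eventuallyEq ?_).congr_deriv ?_
  · filter_upwards [lt_mem_nhds h0] with s hs
    have := (pow_pos hs n).ne'
    simp only [Pi.div_apply]
    field_simp
  · rcases n with _ | m
    · simp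
    · simp only [Nat.add_sub_cancel]
      field_simp
      ring

theorem eq_left_of_p_eq_zero (H : IsRadial n a b x p h) {c : ℝ} (hcb : c ≤ b)
    (hp : ∀ t ∈ Ioo a c, p t = 0) : ∀ t ∈ Icc a c, x t = x a := fun t ht =>
  (eq_of_hasDerivAt_zero ht.1
    (H.cont_x.mono (Icc_subset_Icc_right (ht.2.trans hcb)))
    fun s hs => by
      simpa [hp s ⟨hs.1, hs.2.trans_le ht.2⟩] using
        H.deriv_x s ⟨hs.1, hs.2.trans_le (ht.2.trans hcb)⟩).symm

section Energy

variable {g G : ℝ → ℝ}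

theorem energy_anti (H : IsRadial n a b x p (fun t => g (x t))) (ha : 0 ≤ a)
    (hG : ∀ s, HasDerivAt G (g s) s) {s t : ℝ} (has : a ≤ s) (hst : s ≤ t) (htb : t ≤ b) :
    p t ^ 2 / 2 + G (x t) ≤ p s ^ 2 / 2 + G (x s) := by
  have hsub : Icc s t ⊆ Icc a b := Icc_subset_Icc has htb
  have hGc : Continuous G := continuous_iff_continuousAt.2 fun s => (hG s).continuousAt
  have := le_of_hasDerivAt_nonneg (f := fun t => -(p t ^ 2 / 2 + G (x t)))
    (f' := fun t => n * p t ^ 2 / t) hst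
    ((((H.cont_p.mono hsub).pow 2).div_const 2).add
      (hGc.comp_continuousOn (H.cont_x.mono hsub))).neg
    (fun r hr => by
      have hr' : r ∈ Ioo a b := ⟨has.trans_lt hr.1, hr.2.trans_le htb⟩
      have h0 : r ≠ 0 := (ha.trans_lt hr'.1).ne'
      refine ((((H.deriv_p ha hr').fun_pow 2).div_const 2).fun_add
        ((hG (x r)).comp r (H.deriv_x r hr'))).fun_neg.congr_deriv ?_
      push_cast
      field_simp
      ring)
    (fun r hr => by
      have : 0 < r := (ha.trans has).trans_lt hr.1
      positivity)
  linarith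

theorem weighted_energy_mono (H : IsRadial n a b x p (fun t => g (x t))) (ha : 0 ≤ a)
    (hG : ∀ s, HasDerivAt G (g s) s) (hG0 : ∀ s, 0 ≤ G s) {s t : ℝ} (has : a ≤ s) (hst : s ≤ t)
    (htb : t ≤ b) :
    s ^ (2 * n) * (p s ^ 2 / 2 + G (x s)) ≤ t ^ (2 * n) * (p t ^ 2 / 2 + G (x t)) := by
  have hsub : Icc s t ⊆ Icc a b := Icc_subset_Icc has htb
  have hGc : Continuous G := continuous_iff_continuousAt.2 fun s => (hG s).continuousAt
  have := le_of_hasDerivAt_nonneg (f := fun t => (t ^ n * p t) ^ 2 / 2 + t ^ (2 * n) * G (x t))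
    (f' := fun t => ((2 * n : ℕ) : ℝ) * t ^ (2 * n - 1) * G (x t)) hst
    ((((H.cont_v.mono hsub).pow 2).div_const 2).add
      ((continuous_id.pow (2 * n)).continuousOn.mul
        (hGc.comp_continuousOn (H.cont_x.mono hsub))))
    (fun r hr => by
      have hr' : r ∈ Ioo a b := ⟨has.trans_lt hr.1, hr.2.trans_le htb⟩
      refine ((((H.deriv_v r hr').fun_pow 2).div_const 2).fun_add
        ((hasDerivAt_pow (2 * n) r).fun_mul
          ((hG (x r)).comp r (H.deriv_x r hr')))).congr_deriv ?_
      push_cast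
      simp only [Function.comp]
      ring)
    (fun r hr => by
      have : 0 < r := (ha.trans has).trans_lt hr.1
      have := hG0 (x r)
      positivity)
  have e : ∀ t : ℝ, (t ^ n * p t) ^ 2 / 2 + t ^ (2 * n) * G (x t) =
      t ^ (2 * n) * (p t ^ 2 / 2 + G (x t)) := fun t => by ring
  rwa [e, e] at this

theorem const_of_energy_eq_zero (H : IsRadial n a b x p (fun t => g (x t))) (ha : 0 ≤ a)
    (hG : ∀ s, HasDerivAt G (g s) s) (hG0 : ∀ s, 0 ≤ G s) {s : ℝ} (hs : s ∈ Icc a b)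
    (hps : p s = 0) (hGs : G (x s) = 0) : ∀ t ∈ Icc a b, x t = x a := by
  refine H.eq_left_of_p_eq_zero le_rfl fun t ht => ?_
  have key : p t ^ 2 / 2 + G (x t) ≤ 0 := by
    rcases le_total s t with hst | hts
    · simpa [hps, hGs] using H.energy_anti ha hG hs.1 hst ht.2.le
    · have h1 := H.weighted_energy_mono ha hG hG0 ht.1.le hts hs.2
      rw [hps, hGs] at h1
      have h2 : 0 < t ^ (2 * n) := pow_pos (ha.trans_lt ht.1) _
      by_contra! h3
      have := mul_pos h2 h3
      norm_num at h1
      linarith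
  have := hG0 (x t)
  have : p t ^ 2 = 0 := le_antisymm (by linarith) (sq_nonneg _)
  simpa using this

theorem const_of_backward (H : IsRadial n a b x p (fun t => g (x t))) (ha : 0 ≤ a)
    {c M : ℝ} (hM : ∀ s, |g s| ≤ M * |s - c|) {s : ℝ} (hs : s ∈ Icc a b)
    (hps : p s = 0) (hxs : x s = c) : x a = c := by
  have hM0 : 0 ≤ M := by simpa using (abs_nonneg _).trans (hM (c + 1))
  rw [← hxs]
  refine (H.eq_left_of_p_eq_zero hs.2 (fun e he => ?_) s ⟨hs.1, le_rfl⟩).symm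
  have he0 : 0 < e := ha.trans_lt he.1
  have hsub : Icc e s ⊆ Icc a b := Icc_subset_Icc he.1.le hs.2
  set C := M * s ^ n + (e ^ n)⁻¹ with hC
  have key := le_of_hasDerivAt_nonneg
    (f := fun t => exp (C * t) * ((t ^ n * p t) ^ 2 + (x t - c) ^ 2))
    (f' := fun t => exp (C * t) * (C * ((t ^ n * p t) ^ 2 + (x t - c) ^ 2) +
      (2 * (t ^ n * p t) * (-(t ^ n * g (x t))) + 2 * (x t - c) * p t))) he.2.le
    ((by fun_prop : Continuous fun t : ℝ => exp (C * t)).continuousOn.mul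
      (((H.cont_v.mono hsub).pow 2).add
        (((H.cont_x.mono hsub).sub continuousOn_const).pow 2)))
    (fun t ht => by
      have ht' : t ∈ Ioo a b := ⟨he.1.trans ht.1, ht.2.trans_le hs.2⟩
      have h1 : HasDerivAt (fun t => exp (C * t)) (exp (C * t) * (C * 1)) t :=
        ((hasDerivAt_id t).const_mul C).exp
      refine (h1.fun_mul (((H.deriv_v t ht').fun_pow 2).fun_add
        (((H.deriv_x t ht').sub_const c).fun_pow 2))).congr_deriv ?_
      push_cast
      ring)
    (fun t ht => by
      refine mul_nonneg (exp_pos _).le ?_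
      have ht0 : 0 < t := he0.trans ht.1
      have htn : 0 < t ^ n := pow_pos ht0 n
      have h1 : t ^ n ≤ s ^ n := pow_le_pow_left₀ ht0.le ht.2.le n
      have h2 : (t ^ n)⁻¹ ≤ (e ^ n)⁻¹ :=
        inv_anti₀ (pow_pos he0 n) (pow_le_pow_left₀ he0.le ht.1.le n)
      have h3 : p t = (t ^ n)⁻¹ * (t ^ n * p t) := by field_simp
      have h4 : M * t ^ n + (t ^ n)⁻¹ ≤ C := by rw [hC]; gcongr
      set V := t ^ n * p t
      set y := x t - c with hy
      have h5 := hM (x t)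
      rw [← hy] at h5
      clear_value V y
      have h6 : |V * (t ^ n * g (x t))| ≤ |V| * |y| * (M * t ^ n) := by
        rw [abs_mul, abs_mul, abs_of_pos htn]
        calc |V| * (t ^ n * |g (x t)|) ≤ |V| * (t ^ n * (M * |y|)) := by gcongr
          _ = _ := by ring
      have h7 : |y * p t| ≤ |V| * |y| * (t ^ n)⁻¹ := by
        rw [h3, abs_mul y, abs_mul _ V, abs_of_pos (inv_pos.2 htn)]
        exact le_of_eq (by ring)
      have h8 : 2 * (|V| * |y|) ≤ V ^ 2 + y ^ 2 := by
        nlinarith [sq_nonneg (|V| - |y|), sq_abs V, sq_abs y]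
      have h9 : (|V| * |y|) * (M * t ^ n + (t ^ n)⁻¹) ≤ (|V| * |y|) * C := by gcongr
      have hC0 : 0 ≤ C := le_trans (by positivity) h4
      have h10 : 2 * (|V| * |y|) * C ≤ (V ^ 2 + y ^ 2) * C := by gcongr
      have h11 := le_abs_self (V * (t ^ n * g (x t)))
      have h12 := neg_abs_le (y * p t)
      linarith)
  simp only [hps, hxs, sub_self, mul_zero] at key
  have h1 := exp_pos (C * e)
  have h2 : (e ^ n * p e) ^ 2 + (x e - c) ^ 2 ≤ 0 := by
    by_contra! h3
    have := mul_pos h1 h3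
    norm_num at key
    linarith
  have h3 : (e ^ n * p e) ^ 2 = 0 :=
    le_antisymm (by linarith [sq_nonneg (x e - c)]) (sq_nonneg _)
  have h4 : e ^ n * p e = 0 := by simpa using h3
  exact (mul_eq_zero.1 h4).resolve_left (pow_pos he0 n).ne'

end Energy

end IsRadial

/-- The denominator `x² + (tⁿ p)²` of the Prüfer angle. -/
def phaseSq (n : ℕ) (x p : ℝ → ℝ) (t : ℝ) : ℝ := x t ^ 2 + (t ^ n * p t) ^ 2

/-- The rate at which `(x, -tⁿ p)` rotates about the origin along `(tⁿ x')' = -tⁿ h`, `p = x'`. -/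
noncomputable def angleRate (n : ℕ) (x p h : ℝ → ℝ) (t : ℝ) : ℝ :=
  t ^ n * (h t * x t + p t ^ 2) / phaseSq n x p t

/-- The Prüfer angle of `(x, -tⁿ p)`, normalised to vanish at `a`. -/
noncomputable def angle (n : ℕ) (a : ℝ) (x p h : ℝ → ℝ) (t : ℝ) : ℝ :=
  ∫ s in a..t, angleRate n x p h s

@[simp] theorem angle_left (n : ℕ) (a : ℝ) (x p h : ℝ → ℝ) : angle n a x p h a = 0 := by
  simp [angle]

theorem angle_const_mul (n : ℕ) (a : ℝ) (x p h : ℝ → ℝ) {σ : ℝ} (hσ : σ ^ 2 = 1) :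
    angle n a (fun t => σ * x t) (fun t => σ * p t) (fun t => σ * h t) = angle n a x p h := by
  have : angleRate n (fun t => σ * x t) (fun t => σ * p t) (fun t => σ * h t) =
      angleRate n x p h := by
    ext t
    simp only [angleRate, phaseSq]
    congr 1
    · linear_combination t ^ n * (h t * x t + p t ^ 2) * hσ
    · linear_combination (x t ^ 2 + (t ^ n * p t) ^ 2) * hσ
  unfold angle
  rw [this]

namespace IsRadial

variable {n : ℕ} {a b : ℝ} {x p h : ℝ → ℝ}

theorem cont_phaseSq (H : IsRadial n a b x p h) : ContinuousOn (phaseSq n x p) (Icc a b) :=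
  (H.cont_x.pow 2).add (H.cont_v.pow 2)

theorem cont_angleRate (H : IsRadial n a b x p h) (hnd : ∀ t ∈ Icc a b, 0 < phaseSq n x p t) :
    ContinuousOn (angleRate n x p h) (Icc a b) :=
  ((continuous_id.pow n).continuousOn.mul ((H.cont_h.mul H.cont_x).add (H.cont_p.pow 2))).div
    H.cont_phaseSq fun t ht => (hnd t ht).ne'

theorem cont_angle (H : IsRadial n a b x p h) (hab : a ≤ b)
    (hnd : ∀ t ∈ Icc a b, 0 < phaseSq n x p t) :
    ContinuousOn (angle n a x p h) (Icc a b) := by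
  rw [← uIcc_of_le hab]
  apply intervalIntegral.continuousOn_primitive_interval
  rw [uIcc_of_le hab]
  exact (H.cont_angleRate hnd).integrableOn_Icc

theorem deriv_angle (H : IsRadial n a b x p h)
    (hnd : ∀ t ∈ Icc a b, 0 < phaseSq n x p t) {t : ℝ} (ht : t ∈ Ioo a b) :
    HasDerivAt (angle n a x p h) (angleRate n x p h t) t := by
  have hc := H.cont_angleRate hnd
  apply intervalIntegral.integral_hasDerivAt_right
  · apply ContinuousOn.intervalIntegrable
    rw [uIcc_of_le ht.1.le]
    exact hc.mono (Icc_subset_Icc_right ht.2.le)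
  · exact (hc.mono Ioo_subset_Icc_self).stronglyMeasurableAtFilter isOpen_Ioo t ht
  · exact hc.continuousAt (Icc_mem_nhds ht.1 ht.2)

theorem angleRate_nonneg (ha : 0 ≤ a) (hsign : ∀ t ∈ Icc a b, 0 ≤ h t * x t) {t : ℝ}
    (ht : t ∈ Icc a b) : 0 ≤ angleRate n x p h t := by
  have h1 := hsign t ht
  have h2 : 0 ≤ t := ha.trans ht.1
  unfold angleRate phaseSq
  positivity

theorem angle_mono (H : IsRadial n a b x p h) (ha : 0 ≤ a) (hab : a ≤ b)
    (hnd : ∀ t ∈ Icc a b, 0 < phaseSq n x p t)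
    (hsign : ∀ t ∈ Icc a b, 0 ≤ h t * x t) {s t : ℝ} (has : a ≤ s) (hst : s ≤ t) (htb : t ≤ b) :
    angle n a x p h s ≤ angle n a x p h t :=
  le_of_hasDerivAt_nonneg hst ((H.cont_angle hab hnd).mono (Icc_subset_Icc has htb))
    (fun _ hr => H.deriv_angle hnd ⟨has.trans_lt hr.1, hr.2.trans_le htb⟩)
    (fun _ hr => angleRate_nonneg ha hsign ⟨has.trans hr.1.le, hr.2.le.trans htb⟩)

theorem polar (H : IsRadial n a b x p h) (hab : a ≤ b)
    (hnd : ∀ t ∈ Icc a b, 0 < phaseSq n x p t) (hxa : 0 < x a) {t : ℝ} (ht : t ∈ Icc a b) :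
    x t = √(phaseSq n x p t) * cos (angle n a x p h t) ∧
      t ^ n * p t = -(√(phaseSq n x p t) * sin (angle n a x p h t)) := by
  set θ := angle n a x p h with hθ
  set ρ := fun t => √(phaseSq n x p t) with hρ
  set v := fun t => t ^ n * p t with hv
  have hsub : Icc a t ⊆ Icc a b := Icc_subset_Icc_right ht.2
  have hθc : ContinuousOn θ (Icc a t) := (H.cont_angle hab hnd).mono hsub
  have hsinc : ContinuousOn (fun s => sin (θ s)) (Icc a t) := continuous_sin.comp_continuousOn hθc
  have hcosc : ContinuousOn (fun s => cos (θ s)) (Icc a t) := continuous_cos.comp_continuousOn hθc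
  have hxc := H.cont_x.mono hsub
  have hvc : ContinuousOn v (Icc a t) := H.cont_v.mono hsub
  have hρpos : ∀ s ∈ Icc a b, 0 < ρ s := fun s hs => sqrt_pos.2 (hnd s hs)
  have hρc : ContinuousOn ρ (Icc a t) := (H.cont_phaseSq.mono hsub).sqrt
  have hρsq : ∀ s ∈ Icc a b, ρ s ^ 2 = x s ^ 2 + v s ^ 2 := fun s hs => sq_sqrt (hnd s hs).le
  have hdρ : ∀ s ∈ Ioo a t, HasDerivAt ρ ((x s * p s + v s * (-(s ^ n * h s))) / ρ s) s := by
    intro s hs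
    have hs' : s ∈ Ioo a b := ⟨hs.1, hs.2.trans_le ht.2⟩
    have h1 : HasDerivAt (phaseSq n x p) _ s :=
      ((H.deriv_x s hs').fun_pow 2).fun_add ((H.deriv_v s hs').fun_pow 2)
    refine (h1.sqrt (hnd s (Ioo_subset_Icc_self hs')).ne').congr_deriv ?_
    have := hρpos s (Ioo_subset_Icc_self hs')
    change _ / (2 * ρ s) = _
    field_simp
    push_cast
    ring
  have hrate : ∀ s ∈ Ioo a t, angleRate n x p h s * ρ s ^ 2 = s ^ n * h s * x s + v s * p s := by
    intro s hs
    have hs' : s ∈ Icc a b := ⟨hs.1.le, hs.2.le.trans ht.2⟩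
    have := hnd s hs'
    rw [hρ]
    simp only
    rw [sq_sqrt this.le, angleRate]
    field_simp
    rw [hv]
    ring
  have hmemt : t ∈ Icc a t := ⟨ht.1, le_rfl⟩
  have hS := eq_of_hasDerivAt_zero (f := fun s => (x s * sin (θ s) + v s * cos (θ s)) / ρ s) ht.1
    (((hxc.mul hsinc).add (hvc.mul hcosc)).div hρc fun s hs => (hρpos s (hsub hs)).ne')
    (fun s hs => by
      have hs' : s ∈ Ioo a b := ⟨hs.1, hs.2.trans_le ht.2⟩
      have hdθ := H.deriv_angle hnd hs'
      have h0 := hρpos s (Ioo_subset_Icc_self hs')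
      refine ((((H.deriv_x s hs').fun_mul hdθ.sin).fun_add
        ((H.deriv_v s hs').fun_mul hdθ.cos)).fun_div (hdρ s hs) h0.ne').congr_deriv ?_
      have h1 := hrate s hs
      have h2 := hρsq s (Ioo_subset_Icc_self hs')
      change ((p s * sin (θ s) + x s * (cos (θ s) * angleRate n x p h s) +
        (-(s ^ n * h s) * cos (θ s) + v s * (-sin (θ s) * angleRate n x p h s))) * ρ s -
        (x s * sin (θ s) + v s * cos (θ s)) * _) / _ = 0
      rw [div_eq_zero_iff]
      left
      have e : ∀ A S R : ℝ, A * ρ s - S * (R / ρ s) = (A * ρ s ^ 2 - S * R) / ρ s := by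
        intro A S R
        field_simp
      rw [e, div_eq_zero_iff]
      left
      linear_combination (x s * cos (θ s) - v s * sin (θ s)) * h1 +
        (p s * sin (θ s) - (s ^ n * h s) * cos (θ s)) * h2)
  have hA := eq_of_hasDerivAt_zero (f := fun s => (x s * cos (θ s) - v s * sin (θ s)) / ρ s) ht.1
    (((hxc.mul hcosc).sub (hvc.mul hsinc)).div hρc fun s hs => (hρpos s (hsub hs)).ne')
    (fun s hs => by
      have hs' : s ∈ Ioo a b := ⟨hs.1, hs.2.trans_le ht.2⟩
      have hdθ := H.deriv_angle hnd hs'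
      have h0 := hρpos s (Ioo_subset_Icc_self hs')
      refine ((((H.deriv_x s hs').fun_mul hdθ.cos).fun_sub
        ((H.deriv_v s hs').fun_mul hdθ.sin)).fun_div (hdρ s hs) h0.ne').congr_deriv ?_
      have h1 := hrate s hs
      have h2 := hρsq s (Ioo_subset_Icc_self hs')
      change ((p s * cos (θ s) + x s * (-sin (θ s) * angleRate n x p h s) -
        (-(s ^ n * h s) * sin (θ s) + v s * (cos (θ s) * angleRate n x p h s))) * ρ s -
        (x s * cos (θ s) - v s * sin (θ s)) * _) / _ = 0
      rw [div_eq_zero_iff]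
      left
      have e : ∀ A S R : ℝ, A * ρ s - S * (R / ρ s) = (A * ρ s ^ 2 - S * R) / ρ s := by
        intro A S R
        field_simp
      rw [e, div_eq_zero_iff]
      left
      linear_combination -(x s * sin (θ s) + v s * cos (θ s)) * h1 +
        (p s * cos (θ s) + (s ^ n * h s) * sin (θ s)) * h2)
  have hva : v a = 0 := by simp [hv, H.p_left]
  have hρa : ρ a = x a := by
    have : phaseSq n x p a = x a ^ 2 := by simp [phaseSq, H.p_left]
    rw [hρ]
    simp only
    rw [this, sqrt_sq hxa.le]
  have hθa : θ a = 0 := angle_left ..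
  simp only [hva, hρa, hθa, sin_zero, cos_zero, mul_zero, add_zero, sub_zero, mul_one,
    zero_div, div_self hxa.ne'] at hS hA
  have h0 := (hρpos t ht).ne'
  rw [eq_comm, div_eq_iff h0, zero_mul] at hS
  rw [eq_comm, div_eq_iff h0, one_mul] at hA
  have h1 := sin_sq_add_cos_sq (θ t)
  change x t = ρ t * _ ∧ v t = -(ρ t * _)
  constructor
  · linear_combination cos (θ t) * hA + sin (θ t) * hS - x t * h1
  · linear_combination -sin (θ t) * hA + cos (θ t) * hS - v t * h1

/-- Sturm comparison for Prüfer angles. -/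
theorem angle_le_angle {lam : ℝ} {x₂ p₂ : ℝ → ℝ} (ha : 0 ≤ a) (hab : a ≤ b) (hlam : 0 ≤ lam)
    (H : IsRadial n a b x p h) (H₂ : IsRadial n a b x₂ p₂ (fun t => lam * x₂ t))
    (hnd : ∀ t ∈ Icc a b, 0 < phaseSq n x p t) (hnd₂ : ∀ t ∈ Icc a b, 0 < phaseSq n x₂ p₂ t)
    (hxa : 0 < x a) (hxa₂ : 0 < x₂ a) (hcmp : ∀ t ∈ Icc a b, lam * x t ^ 2 ≤ h t * x t) :
    angle n a x₂ p₂ (fun t => lam * x₂ t) b ≤ angle n a x p h b := by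
  set θ := angle n a x p h
  set θ₂ := angle n a x₂ p₂ (fun t => lam * x₂ t)
  have hbdd : ∀ {x p h : ℝ → ℝ}, IsRadial n a b x p h → (∀ t ∈ Icc a b, 0 < phaseSq n x p t) →
      ∃ B, ∀ t ∈ Icc a b, |p t / √(phaseSq n x p t)| ≤ B := by
    intro x p h H hnd
    have hc : ContinuousOn (fun t => p t / √(phaseSq n x p t)) (Icc a b) :=
      H.cont_p.div H.cont_phaseSq.sqrt fun t ht => (sqrt_pos.2 (hnd t ht)).ne'
    exact isCompact_Icc.exists_bound_of_continuousOn hc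
  obtain ⟨B, hB⟩ := hbdd H hnd
  obtain ⟨B₂, hB₂⟩ := hbdd H₂ hnd₂
  suffices 0 ≤ θ b - θ₂ b by linarith
  refine nonneg_of_deriv_ge_neg_mul_abs (f := fun t => θ t - θ₂ t) (L := B + B₂ + lam * b ^ n) hab
    ((H.cont_angle hab hnd).sub (H₂.cont_angle hab hnd₂))
    (fun t ht => (H.deriv_angle hnd ht).sub (H₂.deriv_angle hnd₂ ht)) (fun t ht => ?_)
    (by simp [θ, θ₂])
  have ht' := Ioo_subset_Icc_self ht
  have ht0 : 0 < t := ha.trans_lt ht.1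
  have htn : 0 < t ^ n := pow_pos ht0 n
  have htb : t ^ n ≤ b ^ n := pow_le_pow_left₀ ht0.le ht.2.le n
  have hb := hB t ht'
  have hb₂ := hB₂ t ht'
  obtain ⟨hx, hv⟩ := H.polar hab hnd hxa ht'
  obtain ⟨hx₂, hv₂⟩ := H₂.polar hab hnd₂ hxa₂ ht'
  have hs := hnd t ht'
  have hs₂ := hnd₂ t ht'
  have hcm := hcmp t ht'
  have hr : 0 < √(phaseSq n x p t) := sqrt_pos.2 hs
  have hr₂ : 0 < √(phaseSq n x₂ p₂ t) := sqrt_pos.2 hs₂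
  have hrr : √(phaseSq n x p t) ^ 2 = phaseSq n x p t := sq_sqrt hs.le
  have hrr₂ : √(phaseSq n x₂ p₂ t) ^ 2 = phaseSq n x₂ p₂ t := sq_sqrt hs₂.le
  unfold angleRate
  rw [← hrr, ← hrr₂]
  change x t = _ * cos (θ t) at hx
  change _ = -(_ * sin (θ t)) at hv
  change x₂ t = _ * cos (θ₂ t) at hx₂
  change _ = -(_ * sin (θ₂ t)) at hv₂
  set ρ := √(phaseSq n x p t)
  set ρ₂ := √(phaseSq n x₂ p₂ t)
  set P := p t / ρ with hP
  set P₂ := p₂ t / ρ₂ with hP₂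
  have hpP : p t = ρ * P := by rw [hP]; field_simp
  have hpP₂ : p₂ t = ρ₂ * P₂ := by rw [hP₂]; field_simp
  have hsin : t ^ n * P = -sin (θ t) := by
    rw [hP, mul_div_assoc', hv]; field_simp
  have hsin₂ : t ^ n * P₂ = -sin (θ₂ t) := by
    rw [hP₂, mul_div_assoc', hv₂]; field_simp
  have e1 : t ^ n * (lam * cos (θ t) ^ 2 + P ^ 2) ≤ t ^ n * (h t * x t + p t ^ 2) / ρ ^ 2 := by
    rw [le_div_iff₀ (by positivity), mul_assoc]
    refine mul_le_mul_of_nonneg_left ?_ htn.le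
    rw [hpP]
    rw [hx] at hcm ⊢
    linarith
  have e2 : t ^ n * (lam * x₂ t * x₂ t + p₂ t ^ 2) / ρ₂ ^ 2 =
      t ^ n * (lam * cos (θ₂ t) ^ 2 + P₂ ^ 2) := by
    rw [hpP₂, hx₂]; field_simp
  rw [e2]
  refine le_trans ?_ (sub_le_sub_right e1 _)
  set κ := -(P * cos (θ₂ t) + P₂ * cos (θ t)) -
    lam * t ^ n * (sin (θ t) * cos (θ₂ t) + cos (θ t) * sin (θ₂ t)) with hκ
  have e3 : t ^ n * (lam * cos (θ t) ^ 2 + P ^ 2) - t ^ n * (lam * cos (θ₂ t) ^ 2 + P₂ ^ 2) =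
      κ * sin (θ t - θ₂ t) := by
    rw [sin_sub, hκ]
    have h1 := sin_sq_add_cos_sq (θ t)
    have h2 := sin_sq_add_cos_sq (θ₂ t)
    have s1 : sin (θ t) = -(t ^ n * P) := by linarith
    have s2 : sin (θ₂ t) = -(t ^ n * P₂) := by linarith
    rw [s1] at h1
    rw [s2] at h2
    rw [s1, s2]
    linear_combination (-t ^ n * lam * cos (θ t) ^ 2 - t ^ n * P ^ 2) * h2 +
      (t ^ n * lam * cos (θ₂ t) ^ 2 + t ^ n * P₂ ^ 2) * h1
  rw [e3]
  have hκb : |κ| ≤ B + B₂ + lam * b ^ n := by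
    have i1 : |P * cos (θ₂ t)| ≤ B := by
      rw [abs_mul]
      exact (mul_le_of_le_one_right (abs_nonneg _) (abs_cos_le_one _)).trans hb
    have i2 : |P₂ * cos (θ t)| ≤ B₂ := by
      rw [abs_mul]
      exact (mul_le_of_le_one_right (abs_nonneg _) (abs_cos_le_one _)).trans hb₂
    have i3 : |lam * t ^ n * (sin (θ t) * cos (θ₂ t) + cos (θ t) * sin (θ₂ t))| ≤ lam * b ^ n := by
      rw [← sin_add, abs_mul, abs_of_nonneg (by positivity : 0 ≤ lam * t ^ n)]
      exact (mul_le_of_le_one_right (by positivity) (abs_sin_le_one _)).trans (by gcongr)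
    rw [hκ]
    rw [abs_le] at *
    constructor <;> linarith
  have hsm : |sin (θ t - θ₂ t)| ≤ |θ t - θ₂ t| := abs_sin_le_abs
  have := neg_abs_le (κ * sin (θ t - θ₂ t))
  rw [abs_mul] at this
  have h4 : |κ| * |sin (θ t - θ₂ t)| ≤ (B + B₂ + lam * b ^ n) * |θ t - θ₂ t| := by
    gcongr
    exact (abs_nonneg _).trans hκb
  linarith

theorem phaseSq_pos_of_const {g G : ℝ → ℝ} (H : IsRadial n a b x p (fun t => g (x t)))
    (ha : 0 ≤ a) (hG : ∀ s, HasDerivAt G (g s) s) (hG0 : ∀ s, 0 ≤ G s) {c : ℝ} (hc : G c = 0)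
    (hconst : ¬ ∀ t ∈ Icc a b, x t = c) :
    ∀ t ∈ Icc a b, 0 < phaseSq n (fun t => x t - c) p t := by
  intro t ht
  refine lt_of_le_of_ne (add_nonneg (sq_nonneg _) (sq_nonneg _)) fun h0 => hconst ?_
  have h1 : (x t - c) ^ 2 + (t ^ n * p t) ^ 2 = 0 := h0.symm
  have h2 : (x t - c) ^ 2 = 0 :=
    le_antisymm (by linarith [sq_nonneg (t ^ n * p t)]) (sq_nonneg _)
  have h3 : (t ^ n * p t) ^ 2 = 0 := by linarith
  have h4 : x t = c := by
    have : x t - c = 0 := by simpa using h2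
    linarith
  have h5 : p t = 0 := by
    rcases ht.1.eq_or_lt with rfl | hat
    · exact H.p_left
    · have : t ^ n * p t = 0 := by simpa using h3
      exact (mul_eq_zero.1 this).resolve_left (pow_pos (ha.trans_lt hat) n).ne'
  have h6 := H.const_of_energy_eq_zero ha hG hG0 ht h5 (by rw [h4, hc])
  intro s hs
  rw [h6 s hs, ← h6 t ht, h4]

/-- The angle at a right endpoint where `p` vanishes is at least `π` times the number of interior
zeros. -/
theorem le_angle_of_encard {lam : ℝ} (ha : 0 ≤ a) (hab : a < b) (hlam : 0 ≤ lam)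
    (H : IsRadial n a b x p (fun t => lam * x t))
    (hnd : ∀ t ∈ Icc a b, 0 < phaseSq n x p t) (hxa : 0 < x a) (hpb : p b = 0) {k : ℕ}
    (hk : {t ∈ Ioo a b | x t = 0}.encard = k) :
    k * π ≤ angle n a x p (fun t => lam * x t) b := by
  set θ := angle n a x p (fun t => lam * x t) with hθ
  have hsign : ∀ t ∈ Icc a b, 0 ≤ lam * x t * x t := fun t _ => by
    rw [mul_assoc]; exact mul_nonneg hlam (mul_self_nonneg _)
  have hmono : ∀ {s t : ℝ}, a ≤ s → s ≤ t → t ≤ b → θ s ≤ θ t := fun hs hst ht =>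
    H.angle_mono ha hab.le hnd hsign hs hst ht
  have hθa : θ a = 0 := angle_left ..
  have hθ0 : ∀ t ∈ Icc a b, 0 ≤ θ t := fun t ht => hθa ▸ hmono le_rfl ht.1 ht.2
  have hbmem : b ∈ Icc a b := ⟨hab.le, le_rfl⟩
  have hsb : sin (θ b) = 0 := by
    have h1 := (H.polar hab.le hnd hxa hbmem).2
    rw [hpb, mul_zero, eq_comm, neg_eq_zero] at h1
    exact (mul_eq_zero.1 h1).resolve_left (sqrt_pos.2 (hnd b hbmem)).ne'
  obtain ⟨j, hj⟩ := sin_eq_zero_iff.1 hsb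
  have hj0 : 0 ≤ j := by
    by_contra! h
    have : (j : ℝ) < 0 := by exact_mod_cast h
    have := mul_neg_of_neg_of_pos this pi_pos
    linarith [hθ0 b hbmem]
  lift j to ℕ using hj0
  have hzero : ∀ t ∈ {t ∈ Ioo a b | x t = 0}, ∃ m : ℕ, m < j ∧ θ t = (2 * m + 1) * π / 2 := by
    rintro t ⟨ht, hxt⟩
    have ht' := Ioo_subset_Icc_self ht
    have h1 := (H.polar hab.le hnd hxa ht').1
    rw [hxt, eq_comm] at h1
    have h2 := (mul_eq_zero.1 h1).resolve_left (sqrt_pos.2 (hnd t ht')).ne'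
    obtain ⟨m, hm⟩ := cos_eq_zero_iff.1 h2
    change θ t = _ at hm
    have h3 := hθ0 t ht'
    have h4 : θ t ≤ θ b := hmono ht'.1 ht'.2 le_rfl
    rw [hm] at h3 h4
    rw [← hj] at h4
    have h5 : (0 : ℝ) ≤ 2 * m + 1 := by
      by_contra! h
      have := mul_neg_of_neg_of_pos h pi_pos
      linarith
    have h6 : (2 * m + 1 : ℝ) ≤ 2 * j := by
      refine le_of_mul_le_mul_right (a := π) ?_ pi_pos
      push_cast at h4
      linarith
    have h7 : 0 ≤ m := by
      have : (0 : ℤ) ≤ 2 * m + 1 := by exact_mod_cast h5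
      omega
    lift m to ℕ using h7
    refine ⟨m, ?_, by simpa using hm⟩
    have : 2 * m + 1 ≤ 2 * j := by exact_mod_cast h6
    omega
  choose! m hm using hzero
  have hnolt : ∀ s ∈ {t ∈ Ioo a b | x t = 0}, ∀ t ∈ {t ∈ Ioo a b | x t = 0}, m s = m t →
      ¬ s < t := by
    rintro s hs t ht hst hlt
    have hθst : θ s = θ t := by rw [(hm s hs).2, (hm t ht).2, hst]
    have hconst : ∀ r ∈ Icc s t, θ r = θ s := fun r hr =>
      le_antisymm ((hmono (hs.1.1.le.trans hr.1) hr.2 ht.1.2.le).trans hθst.ge)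
        (hmono hs.1.1.le hr.1 (hr.2.trans ht.1.2.le))
    have hIoo : ∀ r ∈ Ioo s t, p r = 0 := by
      intro r hr
      have hr' : r ∈ Ioo a b := ⟨hs.1.1.trans hr.1, hr.2.trans ht.1.2⟩
      have hr0 : 0 < r := ha.trans_lt hr'.1
      have h1 : HasDerivAt θ 0 r := (hasDerivAt_const r (θ s)).congr_of_eventuallyEq (by
        filter_upwards [Ioo_mem_nhds hr.1 hr.2] with y hy using hconst y (Ioo_subset_Icc_self hy))
      have h2 := (H.deriv_angle hnd hr').unique h1
      unfold angleRate at h2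
      rw [div_eq_zero_iff, mul_eq_zero] at h2
      have h3 := (h2.resolve_right (hnd r (Ioo_subset_Icc_self hr')).ne').resolve_left
        (pow_pos hr0 n).ne'
      have h4 := hsign r (Ioo_subset_Icc_self hr')
      have h5 : p r ^ 2 = 0 := le_antisymm (by linarith) (sq_nonneg _)
      simpa using h5
    have hsub : Icc s t ⊆ Icc a b := Icc_subset_Icc hs.1.1.le ht.1.2.le
    have hps : p s = 0 := by
      have : MapsTo p (closure (Ioo s t)) (closure {0}) := by
        refine MapsTo.closure_of_continuousOn (fun r hr => hIoo r hr) ?_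
        rw [closure_Ioo hlt.ne]
        exact H.cont_p.mono hsub
      rw [closure_Ioo hlt.ne, closure_singleton] at this
      exact this ⟨le_rfl, hlt.le⟩
    have := hnd s (Ioo_subset_Icc_self hs.1)
    simp [phaseSq, hs.2, hps] at this
  have hinj : InjOn m {t ∈ Ioo a b | x t = 0} := fun s hs t ht hst =>
    le_antisymm (not_lt.1 (hnolt t ht s hs hst.symm)) (not_lt.1 (hnolt s hs t ht hst))
  have hcard := encard_le_encard_of_injOn (t := (Finset.range j : Set ℕ))
    (fun t ht => by simpa using (hm t ht).1) hinj
  rw [hk, encard_coe_eq_coe_finsetCard, Finset.card_range] at hcard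
  have hkj : k ≤ j := by exact_mod_cast hcard
  rw [← hj]
  have : (k : ℝ) ≤ j := by exact_mod_cast hkj
  push_cast
  gcongr

end IsRadial

/-- The derivative of the solution of `(tⁿ u')' = -tⁿ h`, `u' a = 0`, extended by `0` to the left
of `a`. -/
noncomputable def radialSlope (n : ℕ) (a : ℝ) (h : ℝ → ℝ) (t : ℝ) : ℝ :=
  -(∫ s in a..max t a, s ^ n * h s) / max t a ^ n

section RadialSlope

variable {n : ℕ} {a : ℝ} {h h₂ : ℝ → ℝ}

theorem radialSlope_left : radialSlope n a h a = 0 := by simp [radialSlope]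

theorem abs_radialSlope_le (ha : 0 ≤ a) (hh : Continuous h) (t : ℝ) :
    |radialSlope n a h t| ≤ ∫ s in a..max t a, |h s| := by
  have hm : a ≤ max t a := le_max_right _ _
  have hm0 : 0 ≤ max t a := ha.trans hm
  unfold radialSlope
  set m := max t a
  have hI : 0 ≤ ∫ s in a..m, |h s| :=
    intervalIntegral.integral_nonneg hm fun _ _ => abs_nonneg _
  rw [abs_div, abs_neg, abs_of_nonneg (pow_nonneg hm0 n)]
  refine div_le_of_le_mul₀ (pow_nonneg hm0 n) hI ?_
  rw [mul_comm, ← intervalIntegral.integral_const_mul]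
  refine (intervalIntegral.abs_integral_le_integral_abs hm).trans ?_
  refine intervalIntegral.integral_mono_on hm
    (Continuous.intervalIntegrable (by fun_prop) _ _)
    (Continuous.intervalIntegrable (by fun_prop) _ _) fun s hs => ?_
  have hs0 : 0 ≤ s := ha.trans hs.1
  rw [abs_mul, abs_of_nonneg (pow_nonneg hs0 n)]
  exact mul_le_mul_of_nonneg_right (pow_le_pow_left₀ hs0 hs.2 n) (abs_nonneg _)

theorem continuous_radialSlope (ha : 0 ≤ a) (hh : Continuous h) :
    Continuous (radialSlope n a h) := by
  have hI : ∀ {f : ℝ → ℝ}, Continuous f → Continuous fun t => ∫ s in a..max t a, f s :=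
    fun {f} hf => (intervalIntegral.continuous_primitive
      (fun _ _ => hf.intervalIntegrable _ _) a).comp (continuous_id.max continuous_const)
  refine continuous_iff_continuousAt.2 fun t => ?_
  rcases (ha.trans (le_max_right t a)).eq_or_lt with h0 | h0
  · have ht : ∫ s in a..max t a, |h s| = 0 := by
      have : max t a = a := le_antisymm (by rw [← h0]; exact ha) (le_max_right _ _)
      rw [this, intervalIntegral.integral_same]
    have hz : radialSlope n a h t = 0 :=
      abs_nonpos_iff.1 ((abs_radialSlope_le ha hh t).trans ht.le)
    rw [ContinuousAt, hz]
    refine squeeze_zero_norm (fun s => abs_radialSlope_le ha hh s) ?_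
    have := (hI hh.abs).tendsto t
    rwa [ht] at this
  · exact ((hI ((continuous_id.pow n).mul hh)).neg.continuousAt).div
      ((continuous_id.max continuous_const).pow n).continuousAt (pow_pos h0 n).ne'

theorem radialSlope_sub (hh : Continuous h) (hh₂ : Continuous h₂) (t : ℝ) :
    radialSlope n a h t - radialSlope n a h₂ t = radialSlope n a (fun s => h s - h₂ s) t := by
  unfold radialSlope
  simp only [mul_sub]
  rw [intervalIntegral.integral_sub
    (Continuous.intervalIntegrable (by fun_prop) _ _)
    (Continuous.intervalIntegrable (by fun_prop) _ _)]
  ring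

theorem hasDerivAt_flux_radialSlope (ha : 0 ≤ a) (hh : Continuous h) {t : ℝ} (ht : a < t) :
    HasDerivAt (fun t => t ^ n * radialSlope n a h t) (-(t ^ n * h t)) t := by
  have hc : Continuous fun s => s ^ n * h s := (continuous_id.pow n).mul hh
  refine (intervalIntegral.integral_hasDerivAt_right (hc.intervalIntegrable a t)
    (hc.stronglyMeasurableAtFilter _ _) hc.continuousAt).neg.congr_of_eventuallyEq ?_
  filter_upwards [lt_mem_nhds ht] with s hs
  have := (pow_pos (ha.trans_lt hs) n).ne'
  simp only [radialSlope, max_eq_left hs.le, Pi.neg_apply]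
  field_simp

theorem integral_le_of_le_exp {f : ℝ → ℝ} {b K c : ℝ} (hf : Continuous f) (hab : a ≤ b)
    (hK : 0 < K) (hc : 0 ≤ c) (h : ∀ s ∈ Icc a b, f s ≤ c * exp (K * s)) :
    ∫ s in a..b, f s ≤ c / K * exp (K * b) := by
  have h1 : ∫ s in a..b, c * exp (K * s) = c / K * exp (K * b) - c / K * exp (K * a) := by
    refine intervalIntegral.integral_eq_sub_of_hasDerivAt (f := fun s => c / K * exp (K * s))
      (fun s _ => ?_) (Continuous.intervalIntegrable (by fun_prop) _ _)
    refine (((hasDerivAt_id s).const_mul K).exp.const_mul (c / K)).congr_deriv ?_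
    simp only [id]
    field_simp
  have h2 := intervalIntegral.integral_mono_on (μ := MeasureTheory.volume) hab
    (hf.intervalIntegrable _ _)
    (Continuous.intervalIntegrable (by fun_prop : Continuous fun s => c * exp (K * s)) _ _) h
  have : 0 ≤ c / K * exp (K * a) := by positivity
  linarith

theorem abs_radialSlope_le_exp {t K c : ℝ} (ha : 0 ≤ a) (hh : Continuous h) (hat : a ≤ t)
    (hK : 0 < K) (hc : 0 ≤ c) (hle : ∀ s ∈ Icc a t, |h s| ≤ c * exp (K * s)) :
    |radialSlope n a h t| ≤ c / K * exp (K * t) := by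
  refine (abs_radialSlope_le ha hh t).trans ?_
  rw [max_eq_left hat]
  exact integral_le_of_le_exp hh.abs hat hK hc hle

theorem abs_integral_radialSlope_le_exp {t K c : ℝ} (ha : 0 ≤ a) (hh : Continuous h) (hat : a ≤ t)
    (hK : 0 < K) (hc : 0 ≤ c) (hle : ∀ s ∈ Icc a t, |h s| ≤ c * exp (K * s)) :
    |∫ s in a..t, radialSlope n a h s| ≤ c / K / K * exp (K * t) := by
  refine (intervalIntegral.abs_integral_le_integral_abs hat).trans ?_
  exact integral_le_of_le_exp (continuous_radialSlope ha hh).abs hat hK (by positivity)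
    fun s hs => abs_radialSlope_le_exp ha hh hs.1 hK hc
      fun r hr => hle r ⟨hr.1, hr.2.trans hs.2⟩

end RadialSlope

/-- Global solvability of the radial Cauchy problem for a Lipschitz nonlinearity, with Lipschitz
dependence on the initial value. -/
theorem exists_radial_flow (n : ℕ) {a b : ℝ} (ha : 0 ≤ a) (hab : a < b) {g : ℝ → ℝ} {M : ℝ}
    (hg : ∀ s t, |g s - g t| ≤ M * |s - t|) :
    ∃ (u p : ℝ → ℝ → ℝ) (C : ℝ), 0 ≤ C ∧
      (∀ d, u d a = d ∧ p d a = 0 ∧ Continuous (p d) ∧ (∀ t, HasDerivAt (u d) (p d t) t) ∧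
        ∀ t ∈ Ioc a b, HasDerivAt (fun t => t ^ n * p d t) (-(t ^ n * g (u d t))) t) ∧
      (∀ d d', ∀ t ∈ Icc a b, |u d t - u d' t| ≤ C * |d - d'| ∧
        |p d t - p d' t| ≤ C * |d - d'|) ∧
      ∀ c, g c = 0 → ∀ t ∈ Icc a b, u c t = c := by
  have hM0 : 0 ≤ M := by simpa using (abs_nonneg _).trans (hg 1 0)
  have hgc : Continuous g :=
    (LipschitzWith.of_dist_le_mul (K := ⟨M, hM0⟩) fun s t => hg s t).continuous
  set K : ℝ := 1 + 2 * M with hKdef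
  have hK : 0 < K := by positivity
  have hKM : M / K / K ≤ 1 / 2 := by
    rw [div_div, div_le_iff₀ (by positivity)]
    nlinarith
  have hproj : Continuous fun s => projIcc a b hab.le s := continuous_projIcc
  set hz : C(Icc a b, ℝ) → ℝ → ℝ := fun z s =>
    g (exp (K * projIcc a b hab.le s) * z (projIcc a b hab.le s)) with hhz
  have hzc : ∀ z, Continuous (hz z) := fun z => by
    simp only [hhz]
    fun_prop
  have hz_eq : ∀ z, ∀ s (hs : s ∈ Icc a b), hz z s = g (exp (K * s) * z ⟨s, hs⟩) :=
    fun z s hs => by simp only [hhz, projIcc_of_mem hab.le hs]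
  have hz_diff : ∀ z z', ∀ s ∈ Icc a b, |hz z s - hz z' s| ≤ M * dist z z' * exp (K * s) := by
    intro z z' s hs
    rw [hz_eq z s hs, hz_eq z' s hs]
    refine (hg _ _).trans ?_
    rw [← mul_sub, abs_mul, abs_of_pos (exp_pos _)]
    have : |z ⟨s, hs⟩ - z' ⟨s, hs⟩| ≤ dist z z' := by
      rw [← Real.dist_eq]
      exact ContinuousMap.dist_apply_le_dist _
    calc M * (exp (K * s) * |z ⟨s, hs⟩ - z' ⟨s, hs⟩|) ≤ M * (exp (K * s) * dist z z') := by gcongr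
      _ = _ := by ring
  have hslc : ∀ z, Continuous (radialSlope n a (hz z)) := fun z => continuous_radialSlope ha (hzc z)
  set U : ℝ → C(Icc a b, ℝ) → ℝ → ℝ := fun d z t => d + ∫ s in a..t, radialSlope n a (hz z) s
    with hU
  have hUd : ∀ d z t, HasDerivAt (U d z) (radialSlope n a (hz z) t) t := fun d z t =>
    (intervalIntegral.integral_hasDerivAt_right ((hslc z).intervalIntegrable _ _)
      ((hslc z).stronglyMeasurableAtFilter _ _) (hslc z).continuousAt).const_add d
  have hUc : ∀ d z, Continuous (U d z) := fun d z =>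
    continuous_iff_continuousAt.2 fun t => (hUd d z t).continuousAt
  have hdiffc : ∀ z z', Continuous fun s => hz z s - hz z' s := fun z z' => (hzc z).sub (hzc z')
  have hU_diff : ∀ d z z', ∀ t ∈ Icc a b,
      |U d z t - U d z' t| ≤ M * dist z z' / K / K * exp (K * t) := by
    intro d z z' t ht
    simp only [hU]
    rw [add_sub_add_left_eq_sub, ← intervalIntegral.integral_sub
      ((hslc z).intervalIntegrable _ _) ((hslc z').intervalIntegrable _ _)]
    simp only [radialSlope_sub (hzc z) (hzc z')]
    exact abs_integral_radialSlope_le_exp ha (hdiffc z z') ht.1 hK (by positivity)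
      fun s hs => hz_diff z z' s ⟨hs.1, hs.2.trans ht.2⟩
  set S : ℝ → C(Icc a b, ℝ) → C(Icc a b, ℝ) := fun d z =>
    ⟨fun t => exp (-(K * t)) * U d z t, by have := hUc d z; fun_prop⟩ with hS
  have hSapp : ∀ d z t, S d z t = exp (-(K * t)) * U d z t := fun _ _ _ => rfl
  have hcontr : ∀ d, ContractingWith (1 / 2) (S d) := by
    intro d
    refine ⟨by norm_num, LipschitzWith.of_dist_le_mul fun z z' => ?_⟩
    rw [ContinuousMap.dist_le (by positivity)]
    intro t
    rw [Real.dist_eq, hSapp, hSapp, ← mul_sub, abs_mul, abs_of_pos (exp_pos _)]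
    calc exp (-(K * t)) * |U d z t - U d z' t|
        ≤ exp (-(K * t)) * (M * dist z z' / K / K * exp (K * t)) := by
          gcongr
          exact hU_diff d z z' t t.2
      _ = M / K / K * dist z z' * (exp (-(K * t)) * exp (K * t)) := by ring
      _ = M / K / K * dist z z' := by rw [← exp_add]; simp
      _ ≤ _ := by
        push_cast
        gcongr
  set Z : ℝ → C(Icc a b, ℝ) := fun d => ContractingWith.fixedPoint (S d) (hcontr d) with hZ
  have hZfix : ∀ d, S d (Z d) = Z d := fun d => (hcontr d).fixedPoint_isFixedPt
  have hZU : ∀ d t (ht : t ∈ Icc a b), exp (K * t) * Z d ⟨t, ht⟩ = U d (Z d) t := by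
    intro d t ht
    conv_lhs => rw [← hZfix d, hSapp]
    rw [← mul_assoc, ← exp_add]
    simp
  have hZdist : ∀ d d', dist (Z d) (Z d') ≤ 2 * |d - d'| := by
    intro d d'
    refine ((hcontr d).dist_fixedPoint_fixedPoint_of_dist_le' (S d') (hZfix d) (hZfix d')
      (C := |d - d'|) fun z => ?_).trans (le_of_eq ?_)
    · rw [ContinuousMap.dist_le (abs_nonneg _)]
      intro t
      rw [Real.dist_eq, hSapp, hSapp, ← mul_sub, abs_mul, abs_of_pos (exp_pos _)]
      have h1 : U d z t - U d' z t = d - d' := by simp only [hU]; ring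
      rw [h1]
      refine mul_le_of_le_one_left (abs_nonneg _) (exp_le_one_iff.2 ?_)
      have : 0 ≤ K * (t : ℝ) := mul_nonneg hK.le (ha.trans t.2.1)
      linarith
    · push_cast
      ring
  have hexpb : ∀ t ∈ Icc a b, exp (K * t) ≤ exp (K * b) := fun t ht =>
    exp_le_exp.2 (mul_le_mul_of_nonneg_left ht.2 hK.le)
  refine ⟨fun d => U d (Z d), fun d => radialSlope n a (hz (Z d)), 2 * (1 + M) * exp (K * b),
    by positivity, fun d => ⟨by simp [hU], radialSlope_left, hslc _, hUd d _, fun t ht => ?_⟩,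
    fun d d' t ht => ⟨?_, ?_⟩, fun c hc t ht => ?_⟩
  · have ht' := Ioc_subset_Icc_self ht
    have := hasDerivAt_flux_radialSlope (n := n) ha (hzc (Z d)) ht.1
    rwa [hz_eq _ t ht', hZU d t ht'] at this
  · simp only
    rw [← hZU d t ht, ← hZU d' t ht, ← mul_sub, abs_mul, abs_of_pos (exp_pos _)]
    have h1 : |Z d ⟨t, ht⟩ - Z d' ⟨t, ht⟩| ≤ 2 * |d - d'| :=
      by
      rw [← Real.dist_eq]
      exact (ContinuousMap.dist_apply_le_dist _).trans (hZdist d d')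
    calc exp (K * t) * |Z d ⟨t, ht⟩ - Z d' ⟨t, ht⟩|
        ≤ exp (K * b) * ((1 + M) * (2 * |d - d'|)) := by
          refine mul_le_mul (hexpb t ht) (h1.trans ?_) (abs_nonneg _) (exp_pos _).le
          exact le_mul_of_one_le_left (by positivity) (by linarith)
      _ = _ := by ring
  · simp only
    rw [radialSlope_sub (hzc _) (hzc _)]
    refine (abs_radialSlope_le_exp ha (hdiffc _ _) ht.1 hK (by positivity)
      fun s hs => hz_diff _ _ s ⟨hs.1, hs.2.trans ht.2⟩).trans ?_
    calc M * dist (Z d) (Z d') / K * exp (K * t)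
        ≤ ((1 + M) * (2 * |d - d'|)) / 1 * exp (K * b) := by
          gcongr
          · linarith
          · exact hZdist d d'
          · linarith
          · exact ht.2
      _ = _ := by ring
  · set z₀ : C(Icc a b, ℝ) := ⟨fun t => exp (-(K * t)) * c, by fun_prop⟩ with hz₀
    have h0 : ∀ s, hz z₀ s = 0 := by
      intro s
      simp only [hhz, hz₀, ContinuousMap.coe_mk]
      rw [← mul_assoc, ← exp_add]
      simpa using hc
    have hUz : ∀ t, U c z₀ t = c := by
      intro t
      have : ∀ s, radialSlope n a (hz z₀) s = 0 := fun s => by simp [radialSlope, h0]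
      simp [hU, this]
    have hfix : S c z₀ = z₀ := by
      ext t
      rw [hSapp, hUz]
      rfl
    have : Z c = z₀ := ((hcontr c).fixedPoint_unique hfix).symm
    simp only
    rw [this, hUz]

/-- `g` is a globally Lipschitz nonlinearity, vanishing on `(-∞, 0]`, whose primitive `G` is a
potential well with bottom at `1`; energy sublevels of `[0, T]` do not reach beyond `T`. -/
structure IsWell (g G : ℝ → ℝ) (M T : ℝ) : Prop where
  lipschitz : ∀ s t, |g s - g t| ≤ M * |s - t|
  zero_of_nonpos : ∀ s ≤ 0, g s = 0
  zero_at_one : g 1 = 0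
  sign : ∀ s, 0 ≤ g s * (s - 1)
  hasDerivAt : ∀ s, HasDerivAt G (g s) s
  nonneg : ∀ s, 0 ≤ G s
  potential_one : G 1 = 0
  le_of_le : ∀ s d, 0 ≤ d → d ≤ T → G s ≤ G d → s ≤ T

theorem IsWell.continuous {g G : ℝ → ℝ} {M T : ℝ} (W : IsWell g G M T) : Continuous g := by
  have hM0 : 0 ≤ M := by simpa using (abs_nonneg _).trans (W.lipschitz 1 0)
  exact (LipschitzWith.of_dist_le_mul (K := ⟨M, hM0⟩) fun s t => W.lipschitz s t).continuous

namespace IsRadial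

variable {n : ℕ} {a b M T : ℝ} {x p g G : ℝ → ℝ}

theorem le_of_isWell (H : IsRadial n a b x p (fun t => g (x t))) (ha : 0 ≤ a)
    (W : IsWell g G M T) (hx0 : 0 ≤ x a) (hxT : x a ≤ T) {t : ℝ} (ht : t ∈ Icc a b) : x t ≤ T := by
  have := H.energy_anti ha W.hasDerivAt le_rfl ht.1 ht.2
  rw [H.p_left] at this
  exact W.le_of_le _ _ hx0 hxT (by nlinarith [sq_nonneg (p t)])

theorem pos_of_p_eq_zero (H : IsRadial n a b x p (fun t => g (x t))) (ha : 0 ≤ a)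
    (W : IsWell g G M T) (hxa : 0 < x a) {s : ℝ} (hs : s ∈ Icc a b) (hps : p s = 0) :
    ∀ t ∈ Icc a s, 0 < x t := by
  obtain ⟨m, hm, hmin⟩ := isCompact_Icc.exists_isMinOn (nonempty_Icc.2 hs.1)
    (H.cont_x.mono (Icc_subset_Icc_right hs.2))
  suffices h : 0 < x m from fun t ht => h.trans_le (hmin ht)
  by_contra! hneg
  have hma : a < m := by
    refine lt_of_le_of_ne hm.1 fun h => ?_
    rw [← h] at hneg
    exact absurd hxa hneg.not_gt
  have hpm : p m = 0 := by
    rcases hm.2.eq_or_lt with rfl | hms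
    · exact hps
    · exact (hmin.isLocalMin (Icc_mem_nhds hma hms)).hasDerivAt_eq_zero
        (H.deriv_x m ⟨hma, hms.trans_le hs.2⟩)
  have := H.const_of_backward ha (c := x m) (M := M)
    (fun s => by simpa [W.zero_of_nonpos _ hneg] using W.lipschitz s (x m))
    ⟨hm.1, hm.2.trans hs.2⟩ hpm rfl
  linarith

theorem phaseSq_pos_of_isWell (H : IsRadial n a b x p (fun t => g (x t))) (ha : 0 ≤ a)
    (hab : a ≤ b) (W : IsWell g G M T) (hxa : x a ≠ 1) :
    ∀ t ∈ Icc a b, 0 < phaseSq n (fun t => x t - 1) p t :=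
  H.phaseSq_pos_of_const ha W.hasDerivAt W.nonneg W.potential_one
    fun h => hxa (h a ⟨le_rfl, hab⟩)

theorem polar_of_isWell (H : IsRadial n a b x p (fun t => g (x t))) (ha : 0 ≤ a)
    (hab : a ≤ b) (W : IsWell g G M T) (hxa : x a ≠ 1) {t : ℝ} (ht : t ∈ Icc a b) :
    ∃ σ : ℝ, σ ^ 2 = 1 ∧ 0 < σ * (x a - 1) ∧
      σ * (x t - 1) = √(phaseSq n (fun t => x t - 1) p t) *
        cos (angle n a (fun t => x t - 1) p (fun t => g (x t)) t) ∧
      σ * (t ^ n * p t) = -(√(phaseSq n (fun t => x t - 1) p t) *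
        sin (angle n a (fun t => x t - 1) p (fun t => g (x t)) t)) := by
  obtain ⟨σ, hσ, hpos⟩ : ∃ σ : ℝ, σ ^ 2 = 1 ∧ 0 < σ * (x a - 1) := by
    rcases hxa.lt_or_gt with h | h
    · exact ⟨-1, by norm_num, by linarith⟩
    · exact ⟨1, by norm_num, by linarith⟩
  have hph : ∀ t, phaseSq n (fun t => σ * (x t - 1)) (fun t => σ * p t) t =
      phaseSq n (fun t => x t - 1) p t := fun t => by
    simp only [phaseSq]
    linear_combination ((x t - 1) ^ 2 + (t ^ n * p t) ^ 2) * hσ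
  have := ((H.sub_const 1).const_mul σ).polar hab
    (fun t ht => by rw [hph]; exact H.phaseSq_pos_of_isWell ha hab W hxa t ht) hpos ht
  rw [angle_const_mul n a _ _ _ hσ, hph] at this
  exact ⟨σ, hσ, hpos, this.1, by linear_combination this.2⟩

theorem p_eq_zero_of_angle (H : IsRadial n a b x p (fun t => g (x t))) (ha : 0 ≤ a)
    (hab : a ≤ b) (W : IsWell g G M T) (hxa : x a ≠ 1) {t : ℝ} (ht : t ∈ Ioc a b) {m : ℕ}
    (hm : angle n a (fun t => x t - 1) p (fun t => g (x t)) t = m * π) : p t = 0 := by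
  obtain ⟨σ, hσ, -, -, h⟩ := H.polar_of_isWell ha hab W hxa ⟨ht.1.le, ht.2⟩
  rw [hm, sin_nat_mul_pi, mul_zero, neg_zero] at h
  have h1 : σ ≠ 0 := by rintro rfl; norm_num at hσ
  have h2 : t ^ n ≠ 0 := (pow_pos (ha.trans_lt ht.1) n).ne'
  simpa [h1, h2] using h

theorem exists_angle_eq (H : IsRadial n a b x p (fun t => g (x t))) (ha : 0 ≤ a)
    (hab : a ≤ b) (W : IsWell g G M T) (hxa : x a ≠ 1) {c : ℝ} (hc0 : 0 ≤ c)
    (hc : c ≤ angle n a (fun t => x t - 1) p (fun t => g (x t)) b) :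
    ∃ t ∈ Icc a b, angle n a (fun t => x t - 1) p (fun t => g (x t)) t = c := by
  have hcont := (H.sub_const 1).cont_angle hab (H.phaseSq_pos_of_isWell ha hab W hxa)
  exact intermediate_value_Icc hab hcont ⟨by simpa using hc0, hc⟩

theorem exists_eq_one_of_angle (H : IsRadial n a b x p (fun t => g (x t))) (ha : 0 ≤ a)
    (hab : a ≤ b) (W : IsWell g G M T) (hxa : x a ≠ 1)
    (hc : π / 2 ≤ angle n a (fun t => x t - 1) p (fun t => g (x t)) b) :
    ∃ t ∈ Icc a b, x t = 1 := by
  obtain ⟨t, ht, hθ⟩ := H.exists_angle_eq ha hab W hxa (by positivity) hc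
  obtain ⟨σ, hσ, -, h, -⟩ := H.polar_of_isWell ha hab W hxa ht
  rw [hθ, cos_pi_div_two, mul_zero] at h
  have h1 : σ ≠ 0 := by rintro rfl; norm_num at hσ
  refine ⟨t, ht, ?_⟩
  have : x t - 1 = 0 := by simpa [h1] using h
  linarith

theorem angle_eq_zero_of_const {h : ℝ → ℝ} (H : IsRadial n a b x p h) (hab : a ≤ b)
    (hnd : ∀ t ∈ Icc a b, 0 < phaseSq n x p t) (hh : ∀ t ∈ Ioo a b, h t = 0)
    (hx : ∀ t ∈ Icc a b, x t = x a) : angle n a x p h b = 0 := by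
  rw [← angle_left n a x p h]
  refine (eq_of_hasDerivAt_zero hab (H.cont_angle hab hnd) fun t ht => ?_).symm
  have hp : p t = 0 := (H.deriv_x t ht).unique ((hasDerivAt_const t (x a)).congr_of_eventuallyEq <| by
    filter_upwards [Icc_mem_nhds ht.1 ht.2] with s hs using hx s hs)
  exact (H.deriv_angle hnd ht).congr_deriv (by simp [angleRate, hh t ht, hp])

end IsRadial

section Flow

variable {n : ℕ} {a b C M T : ℝ} {g G : ℝ → ℝ} {u p : ℝ → ℝ → ℝ}

theorem continuous_uncurry_projIcc (hab : a ≤ b) (hC : 0 ≤ C) (hc : ∀ d, ContinuousOn (u d) (Icc a b))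
    (hL : ∀ d d', ∀ t ∈ Icc a b, |u d t - u d' t| ≤ C * |d - d'|) :
    Continuous fun z : ℝ × ℝ => u z.1 (projIcc a b hab z.2) := by
  refine continuous_prod_of_continuous_lipschitzWith _ ⟨C, hC⟩ (fun d => ?_) (fun t => ?_)
  · exact (hc d).comp_continuous (continuous_subtype_val.comp continuous_projIcc)
      fun t => (projIcc a b hab t).2
  · exact LipschitzWith.of_dist_le_mul fun d d' => hL d d' _ (projIcc a b hab t).2

theorem continuousOn_angle_flow (ha : 0 ≤ a) (hab : a ≤ b) (hC : 0 ≤ C) (W : IsWell g G M T)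
    (hR : ∀ d, IsRadial n a b (u d) (p d) (fun t => g (u d t))) (hua : ∀ d, u d a = d)
    (hL : ∀ d d', ∀ t ∈ Icc a b, |u d t - u d' t| ≤ C * |d - d'| ∧
        |p d t - p d' t| ≤ C * |d - d'|) :
    ContinuousOn (fun d => angle n a (fun t => u d t - 1) (p d) (fun t => g (u d t)) b) {1}ᶜ := by
  have hu := continuous_uncurry_projIcc hab hC (fun d => (hR d).cont_x)
    fun d d' t ht => (hL d d' t ht).1
  have hp := continuous_uncurry_projIcc hab hC (fun d => (hR d).cont_p)
    fun d d' t ht => (hL d d' t ht).2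
  rw [continuousOn_iff_continuous_domRestrict]
  let τ : ℝ → ℝ := fun t => projIcc a b hab t
  have hτ : Continuous τ := continuous_subtype_val.comp continuous_projIcc
  have hsub : Continuous fun z : ({1}ᶜ : Set ℝ) × ℝ => ((z.1 : ℝ), z.2) := by fun_prop
  have hu' : Continuous fun z : ({1}ᶜ : Set ℝ) × ℝ => u z.1 (τ z.2) := hu.comp hsub
  have hp' : Continuous fun z : ({1}ᶜ : Set ℝ) × ℝ => p z.1 (τ z.2) := hp.comp hsub
  have hg' := W.continuous.comp hu'
  have hτ' : Continuous fun z : ({1}ᶜ : Set ℝ) × ℝ => τ z.2 ^ n := (hτ.comp continuous_snd).pow n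
  have key : Continuous fun d : ({1}ᶜ : Set ℝ) => ∫ t in a..b,
      angleRate n (fun t => u d t - 1) (p d) (fun t => g (u d t)) (τ t) := by
    refine intervalIntegral.continuous_parametric_intervalIntegral_of_continuous' ?_ a b
    refine Continuous.div (hτ'.mul ((hg'.mul (hu'.sub continuous_const)).add (hp'.pow 2)))
      (((hu'.sub continuous_const).pow 2).add ((hτ'.mul hp').pow 2)) fun z => ?_
    exact ((hR z.1).phaseSq_pos_of_isWell ha hab W (by rw [hua]; exact z.1.2) _
      (projIcc a b hab z.2).2).ne'
  refine key.congr fun d => ?_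
  simp only [domRestrict_apply, angle]
  refine intervalIntegral.integral_congr fun t ht => ?_
  rw [uIcc_of_le hab] at ht
  have : τ t = t := by simp only [τ, projIcc_of_mem hab ht]
  simp only [this]

/-- Near the constant solution `1` the angle dominates that of the linearised problem. -/
theorem exists_le_angle_flow {lam : ℝ} (ha : 0 ≤ a) (hab : a < b) (hlam : 0 ≤ lam)
    (W : IsWell g G M T)
    (hR : ∀ d, IsRadial n a b (u d) (p d) (fun t => g (u d t))) (hua : ∀ d, u d a = d)
    (hL : ∀ d d', ∀ t ∈ Icc a b, |u d t - u d' t| ≤ C * |d - d'|)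
    (hu1 : ∀ t ∈ Icc a b, u 1 t = 1)
    (hg : ∀ᶠ s in 𝓝 1, lam * (s - 1) ^ 2 ≤ g s * (s - 1))
    {w w' : ℝ → ℝ} (hw : IsRadial n a b w w' (fun t => lam * w t))
    (hw0 : ∃ t ∈ Icc a b, w t ≠ 0) (hwb : w' b = 0) {k : ℕ}
    (hk : {t ∈ Ioo a b | w t = 0}.encard = k) :
    ∀ᶠ d in 𝓝[≠] 1,
      k * π ≤ angle n a (fun t => u d t - 1) (p d) (fun t => g (u d t)) b := by
  have hndw : ∀ t ∈ Icc a b, 0 < phaseSq n w w' t := by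
    have := hw.phaseSq_pos_of_const (g := fun s => lam * s) (G := fun s => lam * s ^ 2 / 2) (c := 0) ha
      (fun s => (((hasDerivAt_pow 2 s).const_mul lam).div_const 2).congr_deriv (by push_cast; ring))
      (fun s => by positivity) (by simp) (by push Not; exact hw0)
    simpa using this
  have hwa : w a ≠ 0 := fun h0 => by
    have := hndw a ⟨le_rfl, hab.le⟩
    simp [phaseSq, h0, hw.p_left] at this
  obtain ⟨τ, hτ, hτpos⟩ : ∃ τ : ℝ, τ ^ 2 = 1 ∧ 0 < τ * w a := by
    rcases hwa.lt_or_gt with h | h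
    · exact ⟨-1, by norm_num, by linarith⟩
    · exact ⟨1, by norm_num, by linarith⟩
  have hτ0 : τ ≠ 0 := by rintro rfl; norm_num at hτ
  have hfun : (fun t => τ * (lam * w t)) = fun t => lam * (τ * w t) := by ext; ring
  have hwτ : IsRadial n a b (fun t => τ * w t) (fun t => τ * w' t) (fun t => lam * (τ * w t)) :=
    hfun ▸ hw.const_mul τ
  have hndτ : ∀ t ∈ Icc a b, 0 < phaseSq n (fun t => τ * w t) (fun t => τ * w' t) t := fun t ht => by
    have : phaseSq n (fun t => τ * w t) (fun t => τ * w' t) t = phaseSq n w w' t := by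
      simp only [phaseSq]
      linear_combination (w t ^ 2 + (t ^ n * w' t) ^ 2) * hτ
    rw [this]
    exact hndw t ht
  have hkτ := hwτ.le_angle_of_encard ha hab hlam hndτ hτpos (by simp [hwb]) (k := k)
    (by simpa [hτ0] using hk)
  obtain ⟨ε, hε, hgε⟩ := Metric.eventually_nhds_iff.1 hg
  have hnear : ∀ᶠ d in 𝓝 (1 : ℝ), C * |d - 1| < ε := by
    have : Tendsto (fun d : ℝ => C * |d - 1|) (𝓝 1) (𝓝 (C * |(1 : ℝ) - 1|)) :=
      (by fun_prop : Continuous fun d : ℝ => C * |d - 1|).tendsto 1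
    simp only [sub_self, abs_zero, mul_zero] at this
    exact this.eventually (gt_mem_nhds hε)
  filter_upwards [nhdsWithin_le_nhds hnear, self_mem_nhdsWithin] with d hd hd1
  have hxa : u d a ≠ 1 := by rw [hua]; exact hd1
  obtain ⟨σ, hσ, hpos⟩ : ∃ σ : ℝ, σ ^ 2 = 1 ∧ 0 < σ * (u d a - 1) := by
    rcases hxa.lt_or_gt with h | h
    · exact ⟨-1, by norm_num, by linarith⟩
    · exact ⟨1, by norm_num, by linarith⟩
  refine hkτ.trans ?_
  rw [← angle_const_mul n a (fun t => u d t - 1) _ _ hσ]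
  refine IsRadial.angle_le_angle ha hab.le hlam (((hR d).sub_const 1).const_mul σ) hwτ ?_ hndτ hpos
    hτpos ?_
  · intro t ht
    have : phaseSq n (fun t => σ * (u d t - 1)) (fun t => σ * p d t) t =
        phaseSq n (fun t => u d t - 1) (p d) t := by
      simp only [phaseSq]
      linear_combination ((u d t - 1) ^ 2 + (t ^ n * p d t) ^ 2) * hσ
    rw [this]
    exact (hR d).phaseSq_pos_of_isWell ha hab.le W hxa t ht
  · intro t ht
    have h1 : dist (u d t) 1 < ε := by
      have := hL d 1 t ht
      rw [hu1 t ht] at this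
      exact this.trans_lt hd
    have := hgε h1
    linear_combination this + (lam * (u d t - 1) ^ 2 - g (u d t) * (u d t - 1)) * hσ

end Flow

section Power

variable {q r T s : ℝ}

noncomputable def powDiff (q r s : ℝ) : ℝ := s ^ (q - 1) - s ^ (r - 1)

noncomputable def powPotential (q r s : ℝ) : ℝ := s ^ q / q - s ^ r / r + (1 / r - 1 / q)

/-- `powDiff q r` frozen outside `[0, T]`. -/
noncomputable def powDiffTrunc (q r T s : ℝ) : ℝ := powDiff q r (max 0 (min s T))

noncomputable def powWell (q r T s : ℝ) : ℝ := ∫ x in (1 : ℝ)..s, powDiffTrunc q r T x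

theorem powDiffTrunc_of_mem (hs : s ∈ Icc 0 T) : powDiffTrunc q r T s = powDiff q r s := by
  rw [powDiffTrunc, min_eq_left hs.2, max_eq_right hs.1]

theorem hasDerivAt_powPotential (hr2 : 2 ≤ r) (hrq : r < q) (s : ℝ) :
    HasDerivAt (powPotential q r) (powDiff q r s) s := by
  have h1 := (hasDerivAt_rpow_const (x := s) (p := q) (Or.inr (by linarith))).div_const q
  have h2 := (hasDerivAt_rpow_const (x := s) (p := r) (Or.inr (by linarith))).div_const r
  refine ((h1.fun_sub h2).add_const (1 / r - 1 / q)).congr_deriv ?_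
  rw [mul_div_cancel_left₀ _ (by linarith), mul_div_cancel_left₀ _ (by linarith), powDiff]

theorem hasDerivAt_powDiff (hr2 : 2 ≤ r) (hrq : r < q) (s : ℝ) :
    HasDerivAt (powDiff q r) ((q - 1) * s ^ (q - 1 - 1) - (r - 1) * s ^ (r - 1 - 1)) s :=
  (hasDerivAt_rpow_const (Or.inr (by linarith))).fun_sub
    (hasDerivAt_rpow_const (Or.inr (by linarith)))

theorem powDiff_zero (hr2 : 2 ≤ r) (hrq : r < q) : powDiff q r 0 = 0 := by
  rw [powDiff, zero_rpow (by linarith), zero_rpow (by linarith), sub_zero]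

theorem powDiff_one : powDiff q r 1 = 0 := by simp [powDiff]

theorem powDiff_pos (hrq : r < q) (hs : 1 < s) : 0 < powDiff q r s :=
  sub_pos.2 (rpow_lt_rpow_of_exponent_lt hs (by linarith))

theorem powDiff_nonpos (hr2 : 2 ≤ r) (hrq : r < q) (hs0 : 0 ≤ s) (hs : s ≤ 1) :
    powDiff q r s ≤ 0 :=
  sub_nonpos.2 (rpow_le_rpow_of_exponent_ge' hs0 hs (by linarith) (by linarith))

theorem powDiffTrunc_pos (hrq : r < q) (hT : 1 < T) (hs : 1 < s) :
    0 < powDiffTrunc q r T s :=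
  powDiff_pos hrq (lt_max_of_lt_right (lt_min hs hT))

theorem powDiffTrunc_nonpos (hr2 : 2 ≤ r) (hrq : r < q) (hs : s ≤ 1) :
    powDiffTrunc q r T s ≤ 0 :=
  powDiff_nonpos hr2 hrq (le_max_left _ _) (max_le zero_le_one ((min_le_left _ _).trans hs))

theorem exists_lipschitz_powDiffTrunc (hr2 : 2 ≤ r) (hrq : r < q) (hT : 0 ≤ T) :
    ∃ M, ∀ s t, |powDiffTrunc q r T s - powDiffTrunc q r T t| ≤ M * |s - t| := by
  set M := (q - 1) * T ^ (q - 1 - 1) + (r - 1) * T ^ (r - 1 - 1) with hM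
  have hM0 : 0 ≤ M := by
    have := rpow_nonneg hT (q - 1 - 1)
    have := rpow_nonneg hT (r - 1 - 1)
    exact add_nonneg (mul_nonneg (by linarith) ‹_›) (mul_nonneg (by linarith) ‹_›)
  refine ⟨M, fun s t => ?_⟩
  have hmem : ∀ s : ℝ, max 0 (min s T) ∈ Icc 0 T := fun s =>
    ⟨le_max_left _ _, max_le hT (min_le_right _ _)⟩
  have h1 := (convex_Icc 0 T).norm_image_sub_le_of_norm_hasDerivWithin_le (C := M)
    (fun s _ => (hasDerivAt_powDiff hr2 hrq s).hasDerivWithinAt) (fun s hs => by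
      have e1 := rpow_le_rpow hs.1 hs.2 (show 0 ≤ q - 1 - 1 by linarith)
      have e2 := rpow_le_rpow hs.1 hs.2 (show 0 ≤ r - 1 - 1 by linarith)
      have e3 := rpow_nonneg hs.1 (q - 1 - 1)
      have e4 := rpow_nonneg hs.1 (r - 1 - 1)
      have e5 := mul_le_mul_of_nonneg_left e1 (show 0 ≤ q - 1 by linarith)
      have e6 := mul_le_mul_of_nonneg_left e2 (show 0 ≤ r - 1 by linarith)
      have e7 := mul_nonneg (show 0 ≤ q - 1 by linarith) e3
      have e8 := mul_nonneg (show 0 ≤ r - 1 by linarith) e4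
      rw [norm_eq_abs, abs_le]
      constructor <;> linarith) (hmem t) (hmem s)
  have h2 := ((LipschitzWith.id.min_const T).const_max (0 : ℝ)).dist_le_mul s t
  simp only [NNReal.coe_one, one_mul, dist_eq, id] at h2
  exact h1.trans (mul_le_mul_of_nonneg_left h2 hM0)

theorem continuous_powDiffTrunc (hr2 : 2 ≤ r) (hrq : r < q) :
    Continuous (powDiffTrunc q r T) := by
  have h : Continuous (powDiff q r) :=
    continuous_iff_continuousAt.2 fun s => (hasDerivAt_powDiff hr2 hrq s).continuousAt
  exact h.comp (by fun_prop)

theorem hasDerivAt_powWell (hr2 : 2 ≤ r) (hrq : r < q) (s : ℝ) :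
    HasDerivAt (powWell q r T) (powDiffTrunc q r T s) s :=
  intervalIntegral.integral_hasDerivAt_right
    ((continuous_powDiffTrunc hr2 hrq).intervalIntegrable _ _)
    (continuous_powDiffTrunc hr2 hrq).stronglyMeasurable.stronglyMeasurableAtFilter
    (continuous_powDiffTrunc hr2 hrq).continuousAt

theorem powWell_of_mem (hr2 : 2 ≤ r) (hrq : r < q) (hT : 1 < T) (hs : s ∈ Icc 0 T) :
    powWell q r T s = powPotential q r s := by
  have hsub : uIcc 1 s ⊆ Icc 0 T := uIcc_subset_Icc ⟨by norm_num, hT.le⟩ hs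
  have hc := continuous_powDiffTrunc hr2 hrq (T := T)
  rw [powWell, intervalIntegral.integral_eq_sub_of_hasDerivAt (f := powPotential q r)
    (fun x hx => (hasDerivAt_powPotential hr2 hrq x).congr_deriv
      (powDiffTrunc_of_mem (hsub hx)).symm) (hc.intervalIntegrable _ _)]
  simp [powPotential]

theorem exists_isWell (hr2 : 2 ≤ r) (hrq : r < q) (hT : 1 < T) (hTq : q / r ≤ T ^ (q - r)) :
    ∃ M, IsWell (powDiffTrunc q r T) (powWell q r T) M T := by
  obtain ⟨M, hM⟩ := exists_lipschitz_powDiffTrunc hr2 hrq (T := T) (by linarith)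
  have hT0 : 0 ≤ T := by linarith
  have hd := hasDerivAt_powWell hr2 hrq (T := T)
  have hc : Continuous (powWell q r T) := continuous_iff_continuousAt.2 fun s => (hd s).continuousAt
  have hone : powWell q r T 1 = 0 := by simp [powWell]
  have hmono : StrictMonoOn (powWell q r T) (Ici 1) := by
    refine strictMonoOn_of_deriv_pos (convex_Ici 1) hc.continuousOn fun s hs => ?_
    rw [interior_Ici] at hs
    rw [(hd s).deriv]
    exact powDiffTrunc_pos hrq hT hs
  have hanti : AntitoneOn (powWell q r T) (Iic 1) := by
    refine antitoneOn_of_deriv_nonpos (convex_Iic 1) hc.continuousOn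
      (fun s _ => (hd s).differentiableAt.differentiableWithinAt) fun s hs => ?_
    rw [interior_Iic] at hs
    rw [(hd s).deriv]
    exact powDiffTrunc_nonpos hr2 hrq (le_of_lt hs)
  refine ⟨M, hM, fun s hs => ?_, ?_, fun s => ?_, hd, fun s => ?_, hone, ?_⟩
  · rw [powDiffTrunc, max_eq_left ((min_le_left _ _).trans hs), powDiff_zero hr2 hrq]
  · rw [powDiffTrunc_of_mem ⟨zero_le_one, hT.le⟩, powDiff_one]
  · rcases le_or_gt s 1 with h | h
    · exact mul_nonneg_of_nonpos_of_nonpos (powDiffTrunc_nonpos hr2 hrq h) (by linarith)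
    · exact mul_nonneg (powDiffTrunc_pos hrq hT h).le (by linarith)
  · rcases le_total s 1 with h | h
    · exact hone ▸ hanti h (le_refl (1 : ℝ)) h
    · exact hone ▸ hmono.monotoneOn (le_refl (1 : ℝ)) h h
  · intro s d hd0 hdT hle
    by_contra! hsT
    have h1 : powWell q r T T < powWell q r T s := hmono hT.le (hT.le.trans hsT.le) hsT
    have h2 : powWell q r T d ≤ powWell q r T T := by
      rcases le_total d 1 with h | h
      · refine (hanti (zero_le_one : (0 : ℝ) ≤ 1) h hd0).trans ?_
        rw [powWell_of_mem hr2 hrq hT ⟨le_rfl, hT0⟩, powWell_of_mem hr2 hrq hT ⟨hT0, le_rfl⟩,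
          powPotential, powPotential, zero_rpow (by linarith), zero_rpow (by linarith)]
        have h3 : T ^ q = T ^ (q - r) * T ^ r := by rw [← rpow_add (by linarith)]; ring_nf
        have h4 : T ^ r / r ≤ T ^ q / q := by
          rw [h3, div_le_div_iff₀ (by linarith) (by linarith)]
          rw [div_le_iff₀ (by linarith)] at hTq
          nlinarith [rpow_nonneg hT0 r]
        rw [zero_div, zero_div]
        linarith
      · exact hmono.monotoneOn h hT.le hdT
    linarith

/-- The slope of `powDiff q r` at `1` is `q - r`. -/
theorem eventually_le_powDiffTrunc_mul {lam : ℝ} (hr2 : 2 ≤ r) (hrq : r < q) (hT : 1 < T)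
    (hlam : lam < q - r) :
    ∀ᶠ s in 𝓝 1, lam * (s - 1) ^ 2 ≤ powDiffTrunc q r T s * (s - 1) := by
  have hd := hasDerivAt_powDiff hr2 hrq 1
  rw [hasDerivAt_iff_tendsto_slope] at hd
  simp only [one_rpow, mul_one] at hd
  have h1 := hd.eventually (lt_mem_nhds (show lam < q - 1 - (r - 1) by linarith))
  rw [eventually_nhdsWithin_iff] at h1
  filter_upwards [h1, Icc_mem_nhds (a := 0) (b := T) zero_lt_one hT] with s hs hsT
  rw [powDiffTrunc_of_mem hsT]
  rcases eq_or_ne s 1 with rfl | hs1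
  · simp
  · have h2 := hs hs1
    rw [slope_def_field, powDiff_one, sub_zero] at h2
    have h3 : s - 1 ≠ 0 := sub_ne_zero.2 hs1
    have h4 : powDiff q r s * (s - 1) = powDiff q r s / (s - 1) * (s - 1) ^ 2 := by
      field_simp
    rw [h4]
    exact mul_le_mul_of_nonneg_right h2.le (sq_nonneg _)

end Power

section Large

variable {n : ℕ} {a b q r M T : ℝ} {x p : ℝ → ℝ}

theorem powPotential_le (hr2 : 2 ≤ r) (hrq : r < q) {s : ℝ} (hs0 : 0 ≤ s) (hs1 : s ≤ 1) :
    powPotential q r s ≤ 1 / r - 1 / q := by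
  have h1 : s ^ q / q ≤ s ^ r / r :=
    div_le_div₀ (rpow_nonneg hs0 _)
      (rpow_le_rpow_of_exponent_ge' hs0 hs1 (by linarith) hrq.le) (by linarith) hrq.le
  rw [powPotential]
  linarith

theorem tendsto_powPotential (hr2 : 2 ≤ r) (hrq : r < q) :
    Tendsto (powPotential q r) atTop atTop := by
  have h1 : Tendsto (fun s : ℝ => s ^ r * (s ^ (q - r) / q - 1 / r)) atTop atTop := by
    refine (tendsto_rpow_atTop (by linarith)).atTop_mul_atTop₀ ?_
    exact tendsto_atTop_add_const_right _ _
      ((tendsto_rpow_atTop (by linarith)).atTop_div_const (by linarith))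
  refine (tendsto_atTop_add_const_right _ (1 / r - 1 / q) h1).congr' ?_
  filter_upwards [eventually_gt_atTop 0] with s hs
  have : s ^ q = s ^ (q - r) * s ^ r := by rw [← rpow_add hs]; ring_nf
  rw [powPotential, this]
  ring

/-- A solution that starts at `T` and completes half a turn stops at a value below `1`, staying
positive until then. -/
theorem IsRadial.exists_turning_point {g G : ℝ → ℝ} (H : IsRadial n a b x p (fun t => g (x t)))
    (ha : 0 ≤ a) (hab : a ≤ b) (W : IsWell g G M T) (hT : 1 < T) (hxa : x a = T)
    (hπ : π ≤ angle n a (fun t => x t - 1) p (fun t => g (x t)) b) :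
    ∃ s ∈ Ioc a b, p s = 0 ∧ x s < 1 ∧ ∀ t ∈ Icc a s, x t ∈ Ioc 0 T := by
  have hxa1 : x a ≠ 1 := by rw [hxa]; exact hT.ne'
  obtain ⟨s, hs, hθ⟩ := H.exists_angle_eq ha hab W hxa1 pi_pos.le hπ
  have has : a < s := by
    refine lt_of_le_of_ne hs.1 fun h => ?_
    rw [← h, angle_left] at hθ
    exact pi_pos.ne hθ
  have hps : p s = 0 :=
    H.p_eq_zero_of_angle ha hab W hxa1 ⟨has, hs.2⟩ (m := 1) (by simpa using hθ)
  refine ⟨s, ⟨has, hs.2⟩, hps, ?_, fun t ht => ⟨?_, ?_⟩⟩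
  · obtain ⟨σ, hσ, hpos, h, -⟩ := H.polar_of_isWell ha hab W hxa1 hs
    have hnd := sqrt_pos.2 (H.phaseSq_pos_of_isWell ha hab W hxa1 s hs)
    rw [hθ, cos_pi] at h
    rw [hxa] at hpos
    have hσ0 : 0 < σ := (pos_iff_pos_of_mul_pos hpos).2 (by linarith)
    have : σ * (x s - 1) < 0 := by linarith
    have := (neg_iff_pos_of_mul_neg this)
    by_contra! hcon
    have := mul_nonneg hσ0.le (sub_nonneg.2 hcon)
    linarith
  · exact H.pos_of_p_eq_zero ha W (by linarith) hs hps t ht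
  · exact H.le_of_isWell ha W (by linarith) hxa.le ⟨ht.1, ht.2.trans hs.2⟩

theorem angle_lt_pi_of_left_pos
    (H : IsRadial n a b x p (fun t => powDiffTrunc q r T (x t))) (hr2 : 2 ≤ r) (hrq : r < q)
    (ha : 0 ≤ a) (hab : a ≤ b) (W : IsWell (powDiffTrunc q r T) (powWell q r T) M T)
    (hT : 1 < T) (hxa : x a = T)
    (hlarge : b ^ (2 * n) * (1 / r - 1 / q) < a ^ (2 * n) * powPotential q r T) :
    angle n a (fun t => x t - 1) p (fun t => powDiffTrunc q r T (x t)) b < π := by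
  by_contra! hπ
  obtain ⟨s, hs, hps, hxs, hmem⟩ := H.exists_turning_point ha hab W hT hxa hπ
  have h1 := H.weighted_energy_mono ha W.hasDerivAt W.nonneg le_rfl hs.1.le hs.2
  have hxs' := hmem s ⟨hs.1.le, le_rfl⟩
  rw [H.p_left, hps, hxa, powWell_of_mem hr2 hrq hT ⟨by linarith, le_rfl⟩,
    powWell_of_mem hr2 hrq hT ⟨hxs'.1.le, hxs'.2⟩] at h1
  have h2 := powPotential_le hr2 hrq hxs'.1.le hxs.le
  have h3 : s ^ (2 * n) ≤ b ^ (2 * n) := pow_le_pow_left₀ (ha.trans hs.1.le) hs.2 _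
  have h4 : 0 ≤ 1 / r - 1 / q :=
    sub_nonneg.2 (one_div_le_one_div_of_le (by linarith) hrq.le)
  have h5 : s ^ (2 * n) * powPotential q r (x s) ≤ b ^ (2 * n) * (1 / r - 1 / q) :=
    (mul_le_mul_of_nonneg_left h2 (pow_nonneg (ha.trans hs.1.le) _)).trans
      (mul_le_mul_of_nonneg_right h3 h4)
  norm_num at h1 h5 hlarge
  linarith

/-- Absorption of the lower power. -/
theorem exists_rpow_absorb {β γ : ℝ} (hβ : 0 < β) (hγ : 0 ≤ γ) (hr : 0 ≤ r) (hrq : r < q) :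
    ∃ C, 0 ≤ C ∧ ∀ u, 0 ≤ u → γ * u ^ r ≤ β * u ^ q + C := by
  set U := (γ / β) ^ (1 / (q - r)) with hU
  have hγβ : 0 ≤ γ / β := div_nonneg hγ hβ.le
  have hU0 : 0 ≤ U := rpow_nonneg hγβ _
  refine ⟨γ * U ^ r, by positivity, fun u hu => ?_⟩
  rcases le_or_gt u U with h | h
  · have := mul_le_mul_of_nonneg_left (rpow_le_rpow hu h hr) hγ
    have := mul_nonneg hβ.le (rpow_nonneg hu q)
    linarith
  · have hu0 : 0 < u := hU0.trans_lt h
    have h1 : γ / β ≤ u ^ (q - r) := by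
      have := rpow_le_rpow hU0 h.le (show 0 ≤ q - r by linarith)
      rwa [hU, ← rpow_mul hγβ, one_div_mul_cancel (by linarith), rpow_one] at this
    have h2 : u ^ q = u ^ (q - r) * u ^ r := by rw [← rpow_add hu0]; ring_nf
    rw [div_le_iff₀ hβ] at h1
    have h3 := mul_le_mul_of_nonneg_right h1 (rpow_nonneg hu r)
    have : 0 ≤ γ * U ^ r := by positivity
    rw [h2]
    linarith

/-- Pohozaev-type identity. -/
theorem IsRadial.hasDerivAt_pohozaev {g G : ℝ → ℝ} (H : IsRadial n a b x p (fun t => g (x t)))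
    (ha : 0 ≤ a) (hG : ∀ s, HasDerivAt G (g s) s) {t : ℝ} (ht : t ∈ Ioo a b) :
    HasDerivAt (fun t => t ^ (n + 1) * (p t ^ 2 / 2 + G (x t)) + (n - 1) / 2 * (x t * (t ^ n * p t)))
      (t ^ n * ((n + 1) * G (x t) - (n - 1) / 2 * (x t * g (x t)))) t := by
  have h0 : t ≠ 0 := (ha.trans_lt ht.1).ne'
  refine (((hasDerivAt_pow (n + 1) t).fun_mul ((((H.deriv_p ha ht).fun_pow 2).div_const 2).fun_add
    ((hG (x t)).comp t (H.deriv_x t ht)))).fun_add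
    (((H.deriv_x t ht).fun_mul (H.deriv_v t ht)).const_mul (((n : ℝ) - 1) / 2))).congr_deriv ?_
  simp only [Function.comp_apply, Nat.add_sub_cancel, Nat.cast_add, Nat.cast_one, Nat.cast_ofNat,
    pow_succ]
  field_simp
  ring

theorem IsRadial.lower_bound {g : ℝ → ℝ} {B : ℝ} (H : IsRadial n a b x p (fun t => g (x t)))
    (ha : 0 ≤ a) (hB : ∀ s, g s ≤ B) (hB0 : 0 ≤ B) {t : ℝ} (ht : t ∈ Icc a b) :
    x a - B * t ^ 2 / 2 ≤ x t := by
  have hv : ∀ t ∈ Ioo a b, -(B * t) ≤ p t := fun t ht => by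
    have ht0 : 0 < t := ha.trans_lt ht.1
    have h1 := le_of_hasDerivAt_nonneg (f := fun t => t ^ n * p t + B * t ^ (n + 1) / (n + 1))
      (f' := fun t => t ^ n * (B - g (x t))) ht.1.le
      ((H.cont_v.mono (Icc_subset_Icc_right ht.2.le)).add (by fun_prop))
      (fun s hs => ((H.deriv_v s ⟨hs.1, hs.2.trans ht.2⟩).fun_add
        (((hasDerivAt_pow (n + 1) s).const_mul B).div_const ((n : ℝ) + 1))).congr_deriv (by
          push_cast [Nat.add_sub_cancel]
          field_simp
          ring))
      (fun s hs => mul_nonneg (pow_nonneg (ha.trans hs.1.le) _) (by linarith [hB (x s)]))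
    simp only [H.p_left, mul_zero, zero_add] at h1
    have h2 : 0 ≤ B * a ^ (n + 1) / (n + 1) := by positivity
    have h3 : B * t ^ (n + 1) / (n + 1) ≤ B * t ^ (n + 1) :=
      div_le_self (by positivity) (by simp)
    have h4 : 0 ≤ t ^ n * (p t + B * t) := by
      have h5 : t ^ n * (p t + B * t) = t ^ n * p t + B * t ^ (n + 1) := by ring
      linarith
    have := (mul_nonneg_iff_of_pos_left (pow_pos ht0 n)).1 h4
    linarith
  have := le_of_hasDerivAt_nonneg (f := fun t => x t + B * t ^ 2 / 2)
    (f' := fun t => p t + B * t) ht.1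
    ((H.cont_x.mono (Icc_subset_Icc_right ht.2)).add (by fun_prop))
    (fun s hs => ((H.deriv_x s ⟨hs.1, hs.2.trans_le ht.2⟩).fun_add
      (((hasDerivAt_pow 2 s).const_mul B).div_const 2)).congr_deriv (by push_cast; ring))
    (fun s hs => by linarith [hv s ⟨hs.1, hs.2.trans_le ht.2⟩])
  have : 0 ≤ B * a ^ 2 / 2 := by positivity
  linarith

theorem powDiffTrunc_le (hr2 : 2 ≤ r) (hrq : r < q) (hT : 0 ≤ T) (s : ℝ) :
    powDiffTrunc q r T s ≤ T ^ (q - 1) := by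
  have h0 : 0 ≤ max 0 (min s T) := le_max_left _ _
  have h1 := rpow_le_rpow h0 (max_le hT (min_le_right s T)) (show 0 ≤ q - 1 by linarith)
  have h2 := rpow_nonneg h0 (r - 1)
  rw [powDiffTrunc, powDiff]
  linarith

theorem angle_lt_pi_of_left_zero {C : ℝ}
    (H : IsRadial n 0 b x p (fun t => powDiffTrunc q r T (x t))) (hr2 : 2 ≤ r) (hrq : r < q)
    (hb : 0 ≤ b) (W : IsWell (powDiffTrunc q r T) (powWell q r T) M T)
    (hT : 2 ≤ T) (hxa : x 0 = T) {β : ℝ} (hβ : β = (n + 1) / q - (n - 1) / 2) (hβ0 : 0 < β)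
    (hC0 : 0 ≤ C)
    (hC : ∀ u, 0 ≤ u → ((n + 1) / r - (n - 1) / 2) * u ^ r ≤ β / 2 * u ^ q + C)
    (hlarge : b ^ (n + 1) * ((1 / r - 1 / q) + C / (n + 1)) <
      β / 2 * (1 / 2) ^ q / (n + 1) * T ^ (q * β)) :
    angle n 0 (fun t => x t - 1) p (fun t => powDiffTrunc q r T (x t)) b < π := by
  by_contra! hπ
  have hT0 : 0 < T := by linarith
  have hT1 : 1 < T := by linarith
  obtain ⟨s, hs, hps, hxs, hmem⟩ := H.exists_turning_point le_rfl hb W hT1 hxa hπ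
  set ρ := T ^ (1 - q / 2) with hρ
  have hρ0 : 0 < ρ := rpow_pos_of_pos hT0 _
  have hρ2 : T ^ (q - 1) * ρ ^ 2 = T := by
    rw [hρ, ← rpow_natCast, ← rpow_mul hT0.le, ← rpow_add hT0]
    have : q - 1 + (1 - q / 2) * ((2 : ℕ) : ℝ) = 1 := by push_cast; ring
    rw [this, rpow_one]
  have hlow : ∀ t ∈ Icc 0 s, t ≤ ρ → T / 2 ≤ x t := fun t ht htρ => by
    have h1 := H.lower_bound le_rfl (powDiffTrunc_le hr2 hrq hT0.le) (rpow_nonneg hT0.le _)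
      ⟨ht.1, ht.2.trans hs.2⟩
    have h2 := mul_le_mul_of_nonneg_left (pow_le_pow_left₀ ht.1 htρ 2)
      (rpow_nonneg hT0.le (q - 1))
    rw [hxa] at h1
    linarith
  have hρs : ρ < s := by
    by_contra! h
    have := hlow s ⟨hs.1.le, le_rfl⟩ h
    linarith
  have hGc : Continuous (powWell q r T) :=
    continuous_iff_continuousAt.2 fun s => (W.hasDerivAt s).continuousAt
  set P : ℝ → ℝ := fun t => t ^ (n + 1) * (p t ^ 2 / 2 + powWell q r T (x t)) +
    (n - 1) / 2 * (x t * (t ^ n * p t)) with hP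
  have hPc : ContinuousOn P (Icc 0 b) :=
    ((continuous_id.pow (n + 1)).continuousOn.mul
      (((H.cont_p.pow 2).div_const 2).add (hGc.comp_continuousOn H.cont_x))).add
      ((H.cont_x.mul H.cont_v).const_mul _)
  have hr0 : r ≠ 0 := by linarith
  have hq0 : q ≠ 0 := by linarith
  have hPd : ∀ t ∈ Ioo 0 s, β / 2 * x t ^ q ≤
      (n + 1) * powWell q r T (x t) - (n - 1) / 2 * (x t * powDiffTrunc q r T (x t)) + C := by
    intro t ht
    have hx := hmem t ⟨ht.1.le, ht.2.le⟩
    have e1 : x t * x t ^ (q - 1) = x t ^ q := by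
      rw [mul_comm, ← rpow_add_one hx.1.ne', sub_add_cancel]
    have e2 : x t * x t ^ (r - 1) = x t ^ r := by
      rw [mul_comm, ← rpow_add_one hx.1.ne', sub_add_cancel]
    rw [powWell_of_mem hr2 hrq hT1 ⟨hx.1.le, hx.2⟩, powDiffTrunc_of_mem ⟨hx.1.le, hx.2⟩,
      powDiff, mul_sub, e1, e2, powPotential]
    have h4 : 0 ≤ ((n : ℝ) + 1) * (1 / r - 1 / q) :=
      mul_nonneg (by positivity)
        (sub_nonneg.2 (one_div_le_one_div_of_le (by linarith) hrq.le))
    have h5 := hC (x t) hx.1.le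
    have h6 : β * x t ^ q = (n + 1) * (x t ^ q / q) - (n - 1) / 2 * x t ^ q := by rw [hβ]; ring
    have h7 : ((n + 1) / r - (n - 1) / 2) * x t ^ r =
      (n + 1) * (x t ^ r / r) - (n - 1) / 2 * x t ^ r := by ring
    linarith
  have hn1 : (0 : ℝ) < n + 1 := by positivity
  have hpd : ∀ (K : ℝ), ∀ t ∈ Ioo 0 s,
      HasDerivAt (fun t => P t + K * t ^ (n + 1) / (n + 1))
        (t ^ n * ((n + 1) * powWell q r T (x t) -
          (n - 1) / 2 * (x t * powDiffTrunc q r T (x t)) + K)) t := fun K t ht =>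
    ((H.hasDerivAt_pohozaev le_rfl W.hasDerivAt ⟨ht.1, ht.2.trans_le hs.2⟩).fun_add
      (((hasDerivAt_pow (n + 1) t).const_mul K).div_const ((n : ℝ) + 1))).congr_deriv (by
        push_cast [Nat.add_sub_cancel]
        field_simp)
  have hcK : ∀ K : ℝ, ContinuousOn (fun t => P t + K * t ^ (n + 1) / (n + 1)) (Icc 0 b) :=
    fun K => hPc.add (by fun_prop)
  have h1 := le_of_hasDerivAt_nonneg hρ0.le
    ((hcK (C - β / 2 * (T / 2) ^ q)).mono (Icc_subset_Icc_right (hρs.le.trans hs.2)))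
    (fun t ht => hpd _ t ⟨ht.1, ht.2.trans hρs⟩) fun t ht => by
      have ht' : t ∈ Ioo 0 s := ⟨ht.1, ht.2.trans hρs⟩
      have h2 := hlow t ⟨ht'.1.le, ht'.2.le⟩ ht.2.le
      have h3 := rpow_le_rpow (by positivity) h2 (show 0 ≤ q by linarith)
      have h4 := mul_le_mul_of_nonneg_left h3 (half_pos hβ0).le
      exact mul_nonneg (pow_nonneg ht.1.le _) (by linarith [hPd t ht'])
  have h2 := le_of_hasDerivAt_nonneg hρs.le
    ((hcK C).mono (Icc_subset_Icc hρ0.le hs.2))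
    (fun t ht => hpd _ t ⟨hρ0.trans ht.1, ht.2⟩) fun t ht => by
      have ht' : t ∈ Ioo 0 s := ⟨hρ0.trans ht.1, ht.2⟩
      have hx := hmem t ⟨ht'.1.le, ht'.2.le⟩
      have h3 := mul_nonneg (half_pos hβ0).le (rpow_nonneg hx.1.le q)
      exact mul_nonneg (pow_nonneg ht'.1.le _) (by linarith [hPd t ht'])
  have hP0 : P 0 = 0 := by simp [hP, H.p_left]
  have hxs' := hmem s ⟨hs.1.le, le_rfl⟩
  have hPs : P s ≤ s ^ (n + 1) * (1 / r - 1 / q) := by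
    have h3 := powPotential_le hr2 hrq hxs'.1.le hxs.le
    simp only [hP, hps]
    rw [powWell_of_mem hr2 hrq hT1 ⟨hxs'.1.le, hxs'.2⟩]
    have h4 := mul_le_mul_of_nonneg_left h3 (pow_nonneg hs.1.le (n + 1))
    norm_num at h4 ⊢
    linarith
  have hpow : (T / 2) ^ q * ρ ^ (n + 1) = (1 / 2) ^ q * T ^ (q * β) := by
    have e : T / 2 = 1 / 2 * T := by ring
    rw [e, mul_rpow (by norm_num) hT0.le, hρ, ← rpow_natCast, ← rpow_mul hT0.le, mul_assoc,
      ← rpow_add hT0]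
    congr 2
    rw [hβ]
    push_cast
    field_simp
    ring
  simp only [hP0, zero_add, ne_eq, Nat.add_eq_zero_iff, one_ne_zero, and_false, not_false_eq_true,
    zero_pow, mul_zero, zero_div] at h1
  have h3 : s ^ (n + 1) ≤ b ^ (n + 1) := pow_le_pow_left₀ hs.1.le hs.2 _
  have h4 : 0 ≤ (1 / r - 1 / q) + C / (n + 1) :=
    add_nonneg (sub_nonneg.2 (one_div_le_one_div_of_le (by linarith) hrq.le)) (by positivity)
  have h5 := mul_le_mul_of_nonneg_right h3 h4
  have h6 : β / 2 * (1 / 2) ^ q / (n + 1) * T ^ (q * β) =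
      β / 2 * (T / 2) ^ q * ρ ^ (n + 1) / (n + 1) := by
    linear_combination -(β / 2 / (n + 1)) * hpow
  have h7 : (C - β / 2 * (T / 2) ^ q) * ρ ^ (n + 1) / (n + 1) =
    C * ρ ^ (n + 1) / (n + 1) - β / 2 * (T / 2) ^ q * ρ ^ (n + 1) / (n + 1) := by ring
  have h8 : s ^ (n + 1) * ((1 / r - 1 / q) + C / (n + 1)) =
    s ^ (n + 1) * (1 / r - 1 / q) + C * s ^ (n + 1) / (n + 1) := by ring
  linarith

end Large

theorem exists_large_datum (n : ℕ) {a b q r : ℝ} (ha : 0 ≤ a) (hab : a < b) (hr2 : 2 ≤ r)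
    (hrq : r < q) (hsub : a = 0 → 0 < ((n : ℝ) + 1) / q - (n - 1) / 2) :
    ∃ T, 2 ≤ T ∧ q / r ≤ T ^ (q - r) ∧ ∀ M x p,
      IsWell (powDiffTrunc q r T) (powWell q r T) M T →
      IsRadial n a b x p (fun t => powDiffTrunc q r T (x t)) → x a = T →
      angle n a (fun t => x t - 1) p (fun t => powDiffTrunc q r T (x t)) b < π := by
  have h1 : ∀ᶠ T : ℝ in atTop, q / r ≤ T ^ (q - r) :=
    (tendsto_rpow_atTop (by linarith)).eventually_ge_atTop _
  rcases ha.eq_or_lt with rfl | ha'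
  · have hβ := hsub rfl
    set β := ((n : ℝ) + 1) / q - (n - 1) / 2 with hβdef
    have hγ : 0 ≤ ((n : ℝ) + 1) / r - (n - 1) / 2 := by
      have : ((n : ℝ) + 1) / q ≤ (n + 1) / r :=
        div_le_div_of_nonneg_left (by positivity) (by linarith) hrq.le
      linarith
    obtain ⟨C, hC0, hC⟩ := exists_rpow_absorb (half_pos hβ) hγ (show 0 ≤ r by linarith) hrq
    have h2 : ∀ᶠ T : ℝ in atTop, b ^ (n + 1) * ((1 / r - 1 / q) + C / (n + 1)) <
        β / 2 * (1 / 2) ^ q / (n + 1) * T ^ (q * β) :=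
      ((tendsto_rpow_atTop (mul_pos (by linarith) hβ)).const_mul_atTop
        (by positivity)).eventually_gt_atTop _
    obtain ⟨T, ⟨h1, h2⟩, h3⟩ := ((h1.and h2).and (eventually_ge_atTop 2)).exists
    exact ⟨T, h3, h1, fun M x p W H hx =>
      angle_lt_pi_of_left_zero H hr2 hrq hab.le W h3 hx hβdef hβ hC0 hC h2⟩
  · have h2 : ∀ᶠ T : ℝ in atTop,
        b ^ (2 * n) * (1 / r - 1 / q) < a ^ (2 * n) * powPotential q r T :=
      ((tendsto_powPotential hr2 hrq).const_mul_atTop (by positivity)).eventually_gt_atTop _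
    obtain ⟨T, ⟨h1, h2⟩, h3⟩ := ((h1.and h2).and (eventually_ge_atTop 2)).exists
    exact ⟨T, h3, h1, fun M x p W H hx =>
      angle_lt_pi_of_left_pos H hr2 hrq ha hab.le W (by linarith) hx h2⟩

theorem stmt4 (N : ℕ) (hN : 1 ≤ N)
    (R1 R2 : ℝ) (hR1 : 0 ≤ R1) (hR12 : R1 < R2)
    (q r : ℝ) (hr2 : 2 ≤ r) (hrq : r < q)
    (hsub : R1 = 0 → 3 ≤ N → q < 2 * (N : ℝ) / ((N : ℝ) - 2))
    (k : ℕ) (hk : 1 ≤ k)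
    (lam : ℝ) (hlam0 : 0 ≤ lam) (hlam : lam < q - r)
    (w : ℝ → ℝ)
    (hw_nonzero : ∃ x ∈ Icc R1 R2, w x ≠ 0)
    (hw_diff : ∀ x ∈ Icc R1 R2, DifferentiableAt ℝ w x)
    (hw_cont : ContinuousOn (deriv w) (Icc R1 R2))
    (hw_bc1 : deriv w R1 = 0) (hw_bc2 : deriv w R2 = 0)
    (hw_vcont : ContinuousOn (fun x => x ^ (N - 1) * deriv w x) (Icc R1 R2))
    (hw_ode : ∀ x ∈ Ioc R1 R2,
      HasDerivAt (fun t => t ^ (N - 1) * deriv w t) (-(lam * x ^ (N - 1) * w x)) x)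
    (hw_zeros : {x ∈ Ioo R1 R2 | w x = 0}.encard = (k : ℕ∞)) :
    (∃ u : Fin k → ℝ → ℝ,
      (∀ j, NeumannSol 2 N R1 R2 (fun s => s ^ (q - 1) - s ^ (r - 1)) (u j)) ∧
      (∀ j, NonConstOn R1 R2 (u j)) ∧
      (∀ i j, i ≠ j → DistinctOn R1 R2 (u i) (u j)) ∧
      (∀ j, 1 < u j R1)) ∧
    (∃ u : Fin k → ℝ → ℝ,
      (∀ j, NeumannSol 2 N R1 R2 (fun s => s ^ (q - 1) - s ^ (r - 1)) (u j)) ∧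
      (∀ j, NonConstOn R1 R2 (u j)) ∧
      (∀ i j, i ≠ j → DistinctOn R1 R2 (u i) (u j)) ∧
      (∀ j, u j R1 < 1)) := by
  obtain ⟨n, rfl⟩ : ∃ n, N = n + 1 := ⟨N - 1, by lia⟩
  simp only [Nat.add_sub_cancel] at hw_vcont hw_ode
  have hβ : R1 = 0 → 0 < ((n : ℝ) + 1) / q - (n - 1) / 2 := fun h0 => by
    have hq0 : 0 < q := by linarith
    rw [sub_pos, div_lt_div_iff₀ two_pos hq0]
    rcases Nat.lt_or_ge n 2 with hn | hn
    · have : (n : ℝ) ≤ 1 := by exact_mod_cast Nat.le_of_lt_succ hn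
      nlinarith
    · have hn' : (2 : ℝ) ≤ n := by exact_mod_cast hn
      have := hsub h0 (by lia)
      push_cast at this
      rw [lt_div_iff₀ (by linarith)] at this
      linarith
  obtain ⟨T, hT2, hTq, hTπ⟩ := exists_large_datum n hR1 hR12 hr2 hrq hβ
  have hT1 : 1 < T := by linarith
  obtain ⟨M, W⟩ := exists_isWell hr2 hrq hT1 hTq
  obtain ⟨u, p, C, hC, hu, hL, hconst⟩ := exists_radial_flow n hR1 hR12 W.lipschitz
  have hua : ∀ d, u d R1 = d := fun d => (hu d).1
  have hud : ∀ d t, HasDerivAt (u d) (p d t) t := fun d => (hu d).2.2.2.1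
  have huc : ∀ d, Continuous (u d) := fun d =>
    continuous_iff_continuousAt.2 fun t => (hud d t).continuousAt
  have hR : ∀ d, IsRadial n R1 R2 (u d) (p d) (fun t => powDiffTrunc q r T (u d t)) := fun d =>
    { cont_x := (huc d).continuousOn
      cont_p := (hu d).2.2.1.continuousOn
      cont_h := (W.continuous.comp (huc d)).continuousOn
      deriv_x := fun t _ => hud d t
      deriv_v := fun t ht => (hu d).2.2.2.2 t ⟨ht.1, ht.2.le⟩
      p_left := (hu d).2.1 }
  have hwR : IsRadial n R1 R2 w (deriv w) (fun t => lam * w t) :=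
    { cont_x := fun t ht => (hw_diff t ht).continuousAt.continuousWithinAt
      cont_p := hw_cont
      cont_h := fun t ht => ((hw_diff t ht).continuousAt.const_mul lam).continuousWithinAt
      deriv_x := fun t ht => (hw_diff t ⟨ht.1.le, ht.2.le⟩).hasDerivAt
      deriv_v := fun t ht => (hw_ode t ⟨ht.1, ht.2.le⟩).congr_deriv (by ring)
      p_left := hw_bc1 }
  set Θ : ℝ → ℝ := fun d =>
    angle n R1 (fun t => u d t - 1) (p d) (fun t => powDiffTrunc q r T (u d t)) R2 with hΘ
  have hΘc : ContinuousOn Θ {1}ᶜ := continuousOn_angle_flow hR1 hR12.le hC W hR hua hL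
  have hΘ1 : ∀ᶠ d in 𝓝[≠] 1, k * π ≤ Θ d :=
    exists_le_angle_flow hR1 hR12 hlam0 W hR hua (fun d d' t ht => (hL d d' t ht).1)
      (hconst 1 W.zero_at_one) (eventually_le_powDiffTrunc_mul hr2 hrq hT1 hlam) hwR hw_nonzero
      hw_bc2 hw_zeros
  have hΘT : Θ T < π := hTπ M _ _ W (hR T) (hua T)
  have hu0 := hconst 0 (W.zero_of_nonpos 0 le_rfl)
  have hΘ0 : Θ 0 = 0 :=
    ((hR 0).sub_const 1).angle_eq_zero_of_const hR12.le
      ((hR 0).phaseSq_pos_of_isWell hR1 hR12.le W (by simp [hua]))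
      (fun t ht => W.zero_of_nonpos _ (hu0 t ⟨ht.1.le, ht.2.le⟩).le)
      (fun t ht => by rw [hu0 t ht, hua])
  have hsol : ∀ d, 0 < d → d ≤ T → d ≠ 1 → ∀ m : ℕ, 1 ≤ m → Θ d = m * π →
      NeumannSol 2 (n + 1) R1 R2 (fun s => s ^ (q - 1) - s ^ (r - 1)) (u d) ∧
        NonConstOn R1 R2 (u d) := by
    intro d hd0 hdT hd1 m hm hθ
    have hxa : u d R1 ≠ 1 := by rwa [hua]
    have hpb : p d R2 = 0 :=
      (hR d).p_eq_zero_of_angle hR1 hR12.le W hxa ⟨hR12, le_rfl⟩ hθ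
    have hpos := (hR d).pos_of_p_eq_zero hR1 W (by rwa [hua]) ⟨hR12.le, le_rfl⟩ hpb
    have hle : ∀ t ∈ Icc R1 R2, u d t ≤ T := fun t ht =>
      (hR d).le_of_isWell hR1 W (by rw [hua]; exact hd0.le) (by rwa [hua]) ht
    have hderiv : deriv (u d) = p d := funext fun t => (hud d t).deriv
    have hphip : ∀ s, phip 2 s = s := fun s => by simp [phip]
    refine ⟨⟨fun t _ => (hud d t).differentiableAt, ?_, hpos, ?_, ?_, ?_, fun t ht => ?_⟩, ?_⟩
    · rw [hderiv]
      exact (hR d).cont_p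
    · rw [hderiv]
      exact (hR d).p_left
    · rw [hderiv, hpb]
    · simp only [hphip, hderiv, Nat.add_sub_cancel]
      exact (hR d).cont_v
    · simp only [hphip, hderiv, Nat.add_sub_cancel]
      have ht' : t ∈ Icc R1 R2 := ⟨ht.1.le, ht.2⟩
      refine ((hu d).2.2.2.2 t ht).congr_deriv ?_
      rw [powDiffTrunc_of_mem ⟨(hpos t ht').le, hle t ht'⟩, powDiff, neg_mul]
    · obtain ⟨t, ht, h1⟩ := (hR d).exists_eq_one_of_angle hR1 hR12.le W hxa (by
        have : (1 : ℝ) ≤ m := by exact_mod_cast hm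
        change π / 2 ≤ Θ d
        rw [hθ]
        nlinarith [pi_pos])
      exact ⟨R1, ⟨le_rfl, hR12.le⟩, t, ht, by rwa [h1]⟩
  have hdist : ∀ d : Fin k → ℝ, (∀ j, Θ (d j) = ((j + 1 : ℕ) : ℝ) * π) →
      ∀ i j, i ≠ j → DistinctOn R1 R2 (u (d i)) (u (d j)) := by
    intro d hd i j hij
    refine ⟨R1, ⟨le_rfl, hR12.le⟩, fun h => hij ?_⟩
    rw [hua, hua] at h
    have h1 := hd i
    rw [h, hd j] at h1
    have h2 := mul_right_cancel₀ pi_pos.ne' h1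
    norm_cast at h2
    exact Fin.ext (by lia)
  have hjk : ∀ j : Fin k, π ≤ ((j + 1 : ℕ) : ℝ) * π ∧ ((j + 1 : ℕ) : ℝ) * π ≤ k * π := fun j => by
    have h1 : ((1 : ℕ) : ℝ) ≤ ((j + 1 : ℕ) : ℝ) := Nat.cast_le.2 (by lia)
    have h2 : ((j + 1 : ℕ) : ℝ) ≤ k := Nat.cast_le.2 j.2
    rw [Nat.cast_one] at h1
    exact ⟨by nlinarith [pi_pos], mul_le_mul_of_nonneg_right h2 pi_pos.le⟩
  constructor
  · obtain ⟨c, hc, hc1, hcT⟩ := ((hΘ1.filter_mono (nhdsGT_le_nhdsNE 1)).and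
      (Ioo_mem_nhdsGT hT1)).exists
    have hIVT : ∀ j : Fin k, ∃ d ∈ Icc c T, Θ d = ((j + 1 : ℕ) : ℝ) * π := fun j =>
      intermediate_value_Icc' hcT.le
        (hΘc.mono fun d hd => (hc1.trans_le hd.1).ne')
        ⟨hΘT.le.trans (hjk j).1, (hjk j).2.trans hc⟩
    choose d hd hdΘ using hIVT
    have h1 : ∀ j, 1 < d j := fun j => hc1.trans_le (hd j).1
    have h := fun j => hsol (d j) (by linarith [h1 j]) (hd j).2 (h1 j).ne' _ (by lia) (hdΘ j)
    exact ⟨fun j => u (d j), fun j => (h j).1, fun j => (h j).2, hdist d hdΘ,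
      fun j => by simpa only [hua] using h1 j⟩
  · obtain ⟨c, hc, hc0, hc1⟩ := ((hΘ1.filter_mono (nhdsLT_le_nhdsNE 1)).and
      (Ioo_mem_nhdsLT zero_lt_one)).exists
    have hIVT : ∀ j : Fin k, ∃ d ∈ Icc 0 c, Θ d = ((j + 1 : ℕ) : ℝ) * π := fun j =>
      intermediate_value_Icc hc0.le
        (hΘc.mono fun d hd => (hd.2.trans_lt hc1).ne)
        ⟨by rw [hΘ0]; positivity, (hjk j).2.trans hc⟩
    choose d hd hdΘ using hIVT
    have h1 : ∀ j, d j < 1 := fun j => (hd j).2.trans_lt hc1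
    have h0 : ∀ j, 0 < d j := fun j => lt_of_le_of_ne (hd j).1 fun h => by
      have h2 := hdΘ j
      rw [← h, hΘ0] at h2
      linarith [(hjk j).1, pi_pos]
    have h := fun j => hsol (d j) (h0 j) (by linarith [h1 j]) (h1 j).ne _ (by lia) (hdΘ j)
    exact ⟨fun j => u (d j), fun j => (h j).1, fun j => (h j).2, hdist d hdΘ,
      fun j => by simpa only [hua] using h1 j⟩
end

section
/- Assume f satisfies (f_reg), (f_eq), (f_0) and (f_subl), and let R1 = 0. Then for every M > 0 there exists D > 0 such that for every d ≥ D, every solution u of the Cauchy problem with datum d on [0,R2], and every r ∈ [0, r1], one has u(r) + |u'(r)| ≥ M. -/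
open Real Set Filter Topology

lemma abs_phip {p : ℝ} (hp : 1 < p) (s : ℝ) : |phip p s| = |s| ^ (p - 1) := by
  rcases eq_or_ne s 0 with rfl | hs
  · simp [phip, Real.zero_rpow (by linarith : p - 1 ≠ 0)]
  · rw [phip, abs_mul, abs_of_nonneg (by positivity)]
    nth_rewrite 2 [← Real.rpow_one |s|]
    rw [← Real.rpow_add (abs_pos.2 hs)]
    ring_nf

lemma exists_abs_le_mul_rpow {p : ℝ} (hp : 1 < p) {f : ℝ → ℝ} (hcont : ContinuousOn f (Ici 0))
    (heq : Feq f) (h0 : Fzero p f) (hsubl : Fsubl p f) :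
    ∃ C : ℝ, 0 < C ∧ ∀ s, 0 ≤ s → |f s| ≤ C * s ^ (p - 1) := by
  obtain ⟨hf0, hf1, hneg, hpos⟩ := heq
  obtain ⟨c, hc⟩ := h0
  obtain ⟨M, hM, hsub⟩ := hsubl
  obtain ⟨δ, hδ, hδc⟩ := (mem_nhdsGT_iff_exists_Ioo_subset).1 hc
  obtain ⟨A, hA⟩ := eventually_atTop.1 (hsub 1 one_pos)
  rw [mem_Ioi] at hδ
  obtain ⟨K, hK⟩ := (isCompact_Icc (a := (0 : ℝ)) (b := max A 1)).exists_bound_of_continuousOn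
    (hcont.mono Icc_subset_Ici_self)
  have hK0 : 0 ≤ K := (norm_nonneg _).trans (hK 0 ⟨le_rfl, by positivity⟩)
  set ε := min δ 1 with hε
  have hε0 : 0 < ε := lt_min hδ one_pos
  have hεp : 0 < ε ^ (p - 1) := Real.rpow_pos_of_pos hε0 _
  have hKε : 0 ≤ K / ε ^ (p - 1) := by positivity
  refine ⟨|c| + (M + 1) + K / ε ^ (p - 1), by positivity, fun s hs => ?_⟩
  have hc0 := abs_nonneg c
  rcases hs.eq_or_lt with rfl | hs
  · simp [hf0, Real.zero_rpow (by linarith : p - 1 ≠ 0)]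
  have hsp : 0 < s ^ (p - 1) := Real.rpow_pos_of_pos hs _
  suffices h : |f s| ≤ |c| * s ^ (p - 1) ∨ |f s| ≤ (M + 1) * s ^ (p - 1) ∨
      |f s| ≤ K / ε ^ (p - 1) * s ^ (p - 1) by
    have h1 := mul_nonneg hc0 hsp.le
    have h2 : 0 ≤ (M + 1) * s ^ (p - 1) := by positivity
    have h3 := mul_nonneg hKε hsp.le
    rw [add_mul, add_mul]
    rcases h with h | h | h <;> linarith
  rcases lt_or_ge s ε with h | h
  · left
    have h1 : c ≤ f s / s ^ (p - 1) := hδc ⟨hs, h.trans_le (min_le_left _ _)⟩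
    rw [le_div_iff₀ hsp] at h1
    rw [abs_of_neg (hneg s hs (h.trans_le (min_le_right _ _)))]
    nlinarith [neg_abs_le c]
  right
  rcases le_or_gt s (max A 1) with h' | h'
  · right
    refine (hK s ⟨hs.le, h'⟩).trans ?_
    rw [div_mul_eq_mul_div, le_div_iff₀ hεp]
    exact mul_le_mul_of_nonneg_left (Real.rpow_le_rpow hε0.le h (by linarith)) hK0
  · left
    rw [abs_of_pos (hpos s ((le_max_right _ _).trans_lt h')), ← div_le_iff₀ hsp]
    exact hA s ((le_max_left _ _).trans h'.le)

lemma abs_fhat_le {p C : ℝ} {f : ℝ → ℝ} (hC : 0 < C)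
    (hf : ∀ s, 0 ≤ s → |f s| ≤ C * s ^ (p - 1)) (s : ℝ) :
    |fhat f s| ≤ C * |s| ^ (p - 1) := by
  unfold fhat
  split_ifs with h
  · rw [abs_of_nonneg h]
    exact hf s h
  · rw [abs_zero]
    positivity

/-- Solutions stay comparable to their datum on an initial interval of length independent of it. -/
lemma CauchySol.half_le {p : ℝ} (hp : 1 < p) {N : ℕ} {R2 C δ d : ℝ} {g u : ℝ → ℝ} (hC : 0 < C)
    (hg : ∀ s, |g s| ≤ C * |s| ^ (p - 1)) (hδR : δ ≤ R2) (hδ1 : δ ≤ 1)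
    (hδC : C * δ ≤ (1 / 4) ^ (p - 1)) (hd : 0 < d) (hu : CauchySol p N 0 R2 g u d)
    {x : ℝ} (hx : x ∈ Icc 0 δ) : d / 2 ≤ u x := by
  obtain ⟨hdiff, -, hu0, hdu0, hvc, hv⟩ := hu
  have hucont : ContinuousOn u (Icc 0 δ) := fun y hy =>
    (hdiff y ⟨hy.1, hy.2.trans hδR⟩).continuousAt.continuousWithinAt
  obtain ⟨z, hz, hmax⟩ := isCompact_Icc.exists_isMaxOn ⟨x, hx⟩ hucont.abs
  set m := |u z| with hm
  have hmax' : ∀ y ∈ Icc 0 δ, |u y| ≤ m := fun y hy => hmax hy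
  have hm0 : 0 ≤ m := abs_nonneg _
  have hderiv : ∀ y ∈ Ioo 0 δ, |deriv u y| ≤ m / 4 := by
    intro y hy
    have hyR : y ≤ R2 := hy.2.le.trans hδR
    obtain ⟨t, ht, hslope⟩ := exists_hasDerivAt_eq_slope _ _ hy.1
      (hvc.mono (Icc_subset_Icc_right hyR)) (fun t ht => hv t ⟨ht.1, ht.2.le.trans hyR⟩)
    simp only [hdu0, sub_zero] at hslope
    rw [eq_div_iff hy.1.ne', show phip p 0 = 0 by simp [phip], mul_zero, sub_zero] at hslope
    have habs := congrArg abs hslope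
    have hyN : 0 < y ^ (N - 1) := pow_pos hy.1 _
    have htN : t ^ (N - 1) ≤ y ^ (N - 1) := pow_le_pow_left₀ ht.1.le ht.2.le _
    rw [abs_mul, abs_mul, abs_mul, abs_neg, abs_phip hp, abs_of_pos hy.1, abs_of_pos hyN,
      abs_of_pos (pow_pos ht.1 _)] at habs
    have hgt : |g (u t)| ≤ C * m ^ (p - 1) := (hg _).trans
      (mul_le_mul_of_nonneg_left (Real.rpow_le_rpow (abs_nonneg _)
        (hmax' t ⟨ht.1.le, (ht.2.trans hy.2).le⟩) (by linarith)) hC.le)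
    have hmp : 0 ≤ m ^ (p - 1) := Real.rpow_nonneg hm0 _
    have h1 : y ^ (N - 1) * |deriv u y| ^ (p - 1) ≤ y ^ (N - 1) * (C * m ^ (p - 1) * y) := by
      rw [← habs, ← mul_assoc]
      have := hy.1.le
      gcongr
    have h2 : |deriv u y| ^ (p - 1) ≤ (m / 4) ^ (p - 1) := by
      refine (le_of_mul_le_mul_left h1 hyN).trans ?_
      have h3 : C * y ≤ (1 / 4) ^ (p - 1) :=
        (mul_le_mul_of_nonneg_left hy.2.le hC.le).trans hδC
      calc C * m ^ (p - 1) * y = m ^ (p - 1) * (C * y) := by ring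
        _ ≤ m ^ (p - 1) * (1 / 4) ^ (p - 1) := mul_le_mul_of_nonneg_left h3 hmp
        _ = (m / 4) ^ (p - 1) := by
          rw [← Real.mul_rpow hm0 (by norm_num), mul_one_div]
    exact (Real.rpow_le_rpow_iff (abs_nonneg _) (by positivity) (by linarith)).1 h2
  have hclose : ∀ y ∈ Icc 0 δ, |u y - d| ≤ m / 4 := by
    intro y hy
    rcases hy.1.eq_or_lt with rfl | hy0
    · rw [hu0, sub_self, abs_zero]
      positivity
    obtain ⟨t, ht, hslope⟩ := exists_hasDerivAt_eq_slope u (deriv u) hy0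
      (hucont.mono (Icc_subset_Icc_right hy.2))
      (fun t ht => (hdiff t ⟨ht.1.le, ht.2.le.trans (hy.2.trans hδR)⟩).hasDerivAt)
    rw [sub_zero, hu0, eq_div_iff hy0.ne'] at hslope
    rw [← hslope, abs_mul, abs_of_pos hy0]
    have := hderiv t ⟨ht.1, ht.2.trans_le hy.2⟩
    have := abs_nonneg (deriv u t)
    nlinarith [hy.2]
  have h1 := abs_le.1 (hclose x hx)
  have h2 : m ≤ d + m / 4 := by
    have h3 := abs_add_le d (u z - d)
    rw [add_sub_cancel, abs_of_pos hd] at h3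
    linarith [hclose z hz]
  linarith [h1.1]

lemma le_mul_exp_of_neg_mul_le_deriv {E E' : ℝ → ℝ} {a b K : ℝ}
    (hE : ∀ x ∈ Icc a b, HasDerivAt E (E' x) x) (hK : ∀ x ∈ Icc a b, -(K * E x) ≤ E' x)
    {x : ℝ} (hx : x ∈ Icc a b) : E a ≤ E x * exp (K * (x - a)) := by
  have hd : ∀ y ∈ Icc a b, HasDerivAt (fun y => E y * exp (K * (y - a)))
      (E' y * exp (K * (y - a)) + E y * (exp (K * (y - a)) * (K * 1))) y := fun y hy =>
    (hE y hy).mul ((((hasDerivAt_id y).sub_const a).const_mul K).exp)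
  have hmono : MonotoneOn (fun y => E y * exp (K * (y - a))) (Icc a b) := by
    refine monotoneOn_of_deriv_nonneg (convex_Icc a b)
      (fun y hy => (hd y hy).continuousAt.continuousWithinAt)
      (fun y hy => (hd y (interior_subset hy)).differentiableAt.differentiableWithinAt) ?_
    intro y hy
    rw [(hd y (interior_subset hy)).deriv]
    have h1 := hK y (interior_subset hy)
    have h2 := exp_pos (K * (y - a))
    nlinarith
  simpa using hmono ⟨le_rfl, hx.1.trans hx.2⟩ hx hx.1

lemma rpow_sub_one_mul_le {p a b : ℝ} (hp : 1 < p) (ha : 0 ≤ a) (hb : 0 ≤ b) :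
    a ^ (p - 1) * b ≤ a ^ p + b ^ p := by
  have key : ∀ c : ℝ, 0 ≤ c → c ^ (p - 1) * c = c ^ p := fun c hc => by
    nth_rewrite 2 [← Real.rpow_one c]
    rw [← Real.rpow_add' hc (by linarith), sub_add_cancel]
  have hap : 0 ≤ a ^ p := Real.rpow_nonneg ha _
  have hbp : 0 ≤ b ^ p := Real.rpow_nonneg hb _
  rcases le_total a b with h | h
  · have h1 := mul_le_mul_of_nonneg_right
      (Real.rpow_le_rpow ha h (by linarith : (0 : ℝ) ≤ p - 1)) hb
    rw [key b hb] at h1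
    linarith
  · have h1 := mul_le_mul_of_nonneg_left h (Real.rpow_nonneg ha (p - 1))
    rw [key a ha] at h1
    linarith

lemma abs_mul_abs_rpow_sub_two_mul {q : ℝ} (hq : 1 < q) (s : ℝ) :
    |q * |s| ^ (q - 2) * s| = q * |s| ^ (q - 1) := by
  rw [mul_assoc, abs_mul, abs_of_pos (by linarith), ← abs_phip hq, phip]

/-- Away from the origin, the energy `|u|^p + |r^(N-1) φ_p(u')|^(p/(p-1))` decays at most
exponentially, with a rate that does not depend on the solution. -/
lemma exists_energy_rate {p : ℝ} (hp : 1 < p) (N : ℕ) {R2 C δ : ℝ} (g : ℝ → ℝ) (hC : 0 < C)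
    (hg : ∀ s, |g s| ≤ C * |s| ^ (p - 1)) (hδ : 0 < δ) (hδR : δ ≤ R2) :
    ∃ K : ℝ, 0 < K ∧ ∀ (d : ℝ) (u : ℝ → ℝ), CauchySol p N 0 R2 g u d → ∀ x ∈ Icc δ R2,
      |u δ| ^ p ≤ (|u x| ^ p + |x ^ (N - 1) * phip p (deriv u x)| ^ (p / (p - 1)))
        * exp (K * (x - δ)) := by
  have hp1 : 0 < p - 1 := by linarith
  set q := p / (p - 1) with hq
  have hq1 : 1 < q := by rw [hq, one_lt_div hp1]; linarith
  have hq' : q - 1 = 1 / (p - 1) := by rw [hq]; field_simp; ring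
  set A := (1 / δ ^ (N - 1)) ^ (1 / (p - 1)) with hA
  have hR : 0 < R2 := hδ.trans_le hδR
  have hA0 : 0 < A := by positivity
  set B := R2 ^ (N - 1) * C with hB
  have hB0 : 0 < B := by positivity
  have hK0 : 0 < p * A + q * B := by positivity
  refine ⟨p * A + q * B, hK0, fun d u hu x hx => ?_⟩
  obtain ⟨hdiff, -, -, -, -, hv⟩ := hu
  set v : ℝ → ℝ := fun t => t ^ (N - 1) * phip p (deriv u t) with hvdef
  have hE : ∀ y ∈ Icc δ R2, HasDerivAt (fun y => |u y| ^ p + |v y| ^ q)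
      (p * |u y| ^ (p - 2) * u y * deriv u y
        + q * |v y| ^ (q - 2) * v y * (-(y ^ (N - 1)) * g (u y))) y := fun y hy =>
    ((hasDerivAt_abs_rpow (u y) hp).comp y (hdiff y ⟨hδ.le.trans hy.1, hy.2⟩).hasDerivAt).add
      ((hasDerivAt_abs_rpow (v y) hq1).comp y (hv y ⟨hδ.trans_le hy.1, hy.2⟩))
  have hbound : ∀ y ∈ Icc δ R2, -((p * A + q * B) * (|u y| ^ p + |v y| ^ q)) ≤
      p * |u y| ^ (p - 2) * u y * deriv u y
        + q * |v y| ^ (q - 2) * v y * (-(y ^ (N - 1)) * g (u y)) := by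
    intro y hy
    have hy0 : 0 < y := hδ.trans_le hy.1
    have hyN : 0 < y ^ (N - 1) := pow_pos hy0 _
    set b := |v y| ^ (1 / (p - 1)) with hb
    have hb0 : 0 ≤ b := by positivity
    have hbp : b ^ p = |v y| ^ q := by
      rw [hb, ← Real.rpow_mul (abs_nonneg _), one_div_mul_eq_div]
    have hvabs : |v y| = y ^ (N - 1) * |deriv u y| ^ (p - 1) := by
      simp only [hvdef]
      rw [abs_mul, abs_of_pos hyN, abs_phip hp]
    have hdu : |deriv u y| ≤ A * b := by
      have h1 : |deriv u y| ^ (p - 1) ≤ 1 / δ ^ (N - 1) * |v y| := by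
        rw [one_div_mul_eq_div, le_div_iff₀ (by positivity), hvabs, mul_comm]
        exact mul_le_mul_of_nonneg_right (pow_le_pow_left₀ hδ.le hy.1 _) (by positivity)
      have h2 := Real.rpow_le_rpow (by positivity) h1 (one_div_pos.2 hp1).le
      rwa [← Real.rpow_mul (abs_nonneg _), mul_one_div_cancel hp1.ne', Real.rpow_one,
        Real.mul_rpow (by positivity) (abs_nonneg _)] at h2
    have hgy : |-(y ^ (N - 1)) * g (u y)| ≤ B * |u y| ^ (p - 1) := by
      rw [abs_mul, abs_neg, abs_of_pos hyN, hB, mul_assoc]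
      exact mul_le_mul (pow_le_pow_left₀ hy0.le hy.2 _) (hg _) (abs_nonneg _) (by positivity)
    have hup : 0 ≤ |u y| ^ (p - 1) := by positivity
    have h1 : |p * |u y| ^ (p - 2) * u y * deriv u y| ≤ p * A * (|u y| ^ (p - 1) * b) := by
      rw [abs_mul, abs_mul_abs_rpow_sub_two_mul hp]
      calc _ ≤ p * |u y| ^ (p - 1) * (A * b) := by gcongr
        _ = _ := by ring
    have h2 : |q * |v y| ^ (q - 2) * v y * (-(y ^ (N - 1)) * g (u y))|
        ≤ q * B * (|u y| ^ (p - 1) * b) := by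
      rw [abs_mul, abs_mul_abs_rpow_sub_two_mul hq1, hq', ← hb]
      calc _ ≤ q * b * (B * |u y| ^ (p - 1)) := by gcongr
        _ = _ := by ring
    have h3 := rpow_sub_one_mul_le hp (abs_nonneg (u y)) hb0
    rw [hbp] at h3
    have h4 := mul_le_mul_of_nonneg_left h3 hK0.le
    rw [add_mul] at h4
    linarith [neg_abs_le (p * |u y| ^ (p - 2) * u y * deriv u y),
      neg_abs_le (q * |v y| ^ (q - 2) * v y * (-(y ^ (N - 1)) * g (u y)))]
  refine le_trans ?_ (le_mul_exp_of_neg_mul_le_deriv hE hbound hx)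
  exact le_add_of_nonneg_right (by positivity)

lemma rOne_le {R1 R2 : ℝ} (h : R1 ≤ R2) (u : ℝ → ℝ) : rOne R1 R2 u ≤ R2 :=
  csSup_le ⟨R1, ⟨le_rfl, h⟩, by simp⟩ fun _ hx => hx.1.2

lemma nonneg_of_mem_Icc_rOne {R1 R2 : ℝ} {u : ℝ → ℝ} (h : R1 ≤ R2)
    (hu : ContinuousOn u (Icc R1 R2)) (hu1 : 0 ≤ u R1) {x : ℝ} (hx : x ∈ Icc R1 (rOne R1 R2 u)) :
    0 ≤ u x := by
  have hpos : ∀ s ∈ Ico R1 (rOne R1 R2 u), 0 < u s := by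
    intro s hs
    have hne : {x | x ∈ Icc R1 R2 ∧ ∀ s ∈ Ico R1 x, 0 < u s}.Nonempty :=
      ⟨R1, ⟨le_rfl, h⟩, by simp⟩
    obtain ⟨y, hy, hsy⟩ := exists_lt_of_lt_csSup hne hs.2
    exact hy.2 s ⟨hs.1, hsy⟩
  rcases hx.1.eq_or_lt with rfl | hx1
  · exact hu1
  have hcl : x ∈ closure (Ico R1 x) := by
    rw [closure_Ico hx1.ne]
    exact ⟨hx1.le, le_rfl⟩
  have hcw : ContinuousWithinAt u (Ico R1 x) x :=
    (hu x ⟨hx.1, hx.2.trans (rOne_le h u)⟩).mono fun y hy =>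
      ⟨hy.1, hy.2.le.trans (hx.2.trans (rOne_le h u))⟩
  have := hcw.mem_closure hcl (t := Ici 0)
    fun y hy => (hpos y ⟨hy.1, hy.2.trans_le hx.2⟩).le
  rwa [closure_Ici] at this

theorem stmt15 (p : ℝ) (hp : 1 < p) (N : ℕ) (hN : 1 ≤ N)
    (R2 : ℝ) (hR2 : 0 < R2)
    (f : ℝ → ℝ) (hreg : Freg f) (heq : Feq f) (h0 : Fzero p f) (hsubl : Fsubl p f) :
    ∀ M : ℝ, 0 < M → ∃ D : ℝ, 0 < D ∧ ∀ d : ℝ, D ≤ d →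
      ∀ u : ℝ → ℝ, CauchySol p N 0 R2 (fhat f) u d →
        ∀ x ∈ Icc 0 (rOne 0 R2 u), M ≤ u x + |deriv u x| := by
  intro M hM
  have hp0 : 0 < p := by linarith
  have hp1 : 0 < p - 1 := by linarith
  obtain ⟨C, hC, hf⟩ := exists_abs_le_mul_rpow hp hreg.1 heq h0 hsubl
  have hg := abs_fhat_le hC hf
  obtain ⟨δ, hδ, hδ1, hδR, hδC⟩ :
      ∃ δ : ℝ, 0 < δ ∧ δ ≤ 1 ∧ δ ≤ R2 ∧ C * δ ≤ (1 / 4) ^ (p - 1) := by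
    refine ⟨min (min 1 R2) ((1 / 4) ^ (p - 1) / C), by positivity,
      (min_le_left _ _).trans (min_le_left _ _), (min_le_left _ _).trans (min_le_right _ _), ?_⟩
    rw [mul_comm, ← le_div_iff₀ hC]
    exact min_le_right _ _
  obtain ⟨K, hK, hrate⟩ := exists_energy_rate hp N (fhat f) hC hg hδ hδR
  set Q := (M ^ p + (R2 ^ (N - 1) * M ^ (p - 1)) ^ (p / (p - 1))) * exp (K * R2) with hQ
  have hQ0 : 0 < Q := by positivity
  refine ⟨2 * M + 2 * Q ^ (1 / p), by positivity, fun d hd u hu x hx => ?_⟩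
  have hQp : 0 < Q ^ (1 / p) := by positivity
  have hd0 : 0 < d := by linarith
  have hhalf : ∀ y ∈ Icc 0 δ, d / 2 ≤ u y := fun y hy =>
    hu.half_le hp hC hg hδR hδ1 hδC hd0 hy
  rcases le_total x δ with hxδ | hxδ
  · linarith [hhalf x ⟨hx.1, hxδ⟩, abs_nonneg (deriv u x)]
  have hxR : x ≤ R2 := hx.2.trans (rOne_le hR2.le u)
  have hux : 0 ≤ u x := nonneg_of_mem_Icc_rOne hR2.le
    (fun y hy => (hu.1 y hy).continuousAt.continuousWithinAt) (hu.2.2.1 ▸ hd0.le) hx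
  by_contra! hlt
  have hduM : |deriv u x| ≤ M := by linarith
  have huM : |u x| ≤ M := by
    rw [abs_of_nonneg hux]
    linarith [abs_nonneg (deriv u x)]
  have hvM : |x ^ (N - 1) * phip p (deriv u x)| ≤ R2 ^ (N - 1) * M ^ (p - 1) := by
    rw [abs_mul, abs_phip hp, abs_of_nonneg (pow_nonneg hx.1 _)]
    have := hx.1
    gcongr
  have hQle : |u δ| ^ p ≤ Q := by
    refine (hrate d u hu x ⟨hxδ, hxR⟩).trans ?_
    rw [hQ]
    gcongr
    linarith
  have hle : |u δ| ≤ Q ^ (1 / p) := by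
    have h := Real.rpow_le_rpow (by positivity) hQle (one_div_pos.2 hp0).le
    rwa [← Real.rpow_mul (abs_nonneg _), mul_one_div_cancel hp0.ne', Real.rpow_one] at h
  linarith [hhalf δ ⟨hδ.le, le_rfl⟩, le_abs_self (u δ)]
end
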